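/- arXiv:1909.09832 — 3 statements merged into one kernel-verified Lean document; each statement's English description precedes it below -/
import Mathlib

section
/- Let p be a prime number, assume A (hence K) has characteristic p, and let L/K be a cyclic Galois extension of degree p with B the integral closure of A in L. Let H be the ideal of A associated to L/K and assume H ≠ A. Let C := {v_A(x) : x ∈ H, x ≠ 0} ⊆ Γ_A. Then either C has a least element, or for every c ∈ C there exists d ∈ Γ_A such that p·d ∈ C and p·d ≤ c. -/
open scoped Pointwise in
theorem hens_isLocal {A B G : Type*} [CommRing A] [HenselianLocalRing A] [CommRing B] [IsDomain B]
    [Algebra A B] [Group G] [Finite G] [MulSemiringAction G B] [SMulCommClass G A B]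
    [Algebra.IsInvariant A B G] : IsLocalRing B := by
  classical
  cases nonempty_fintype G
  have hint : Algebra.IsIntegral A B := Algebra.IsInvariant.isIntegral A B G
  have hunder : ∀ P : Ideal B, P.IsMaximal → P.under A = IsLocalRing.maximalIdeal A := by
    intro P hP
    exact IsLocalRing.eq_maximalIdeal (Ideal.isMaximal_comap_of_isIntegral_of_isMaximal P)
  refine IsLocalRing.of_unique_max_ideal ?_
  obtain ⟨P, hP⟩ := Ideal.exists_maximal B
  refine ⟨P, hP, ?_⟩
  intro Q hQ
  by_contra hne
  obtain ⟨g₀, hg₀⟩ := Algebra.IsInvariant.exists_smul_of_under_eq A B G P Q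
    ((hunder P hP).trans (hunder Q hQ).symm)
  have hg₀' : g₀ • P ≠ P := fun h => hne (hg₀.trans h)
  let I := Finset.inf {g : G | g • P ≠ P} (fun g ↦ g • P)
  have h1 : ¬ I ≤ P := by
    rw [Ideal.IsPrime.inf_le' inferInstance]
    rintro ⟨g, hg1, hg2⟩
    exact (Finset.mem_filter.mp hg1).2 (smul_eq_of_smul_le hg2)
  have h2 : P ⊔ I = ⊤ := by
    by_contra h
    exact h1 ((hP.eq_of_le h le_sup_left).symm ▸ le_sup_right)
  obtain ⟨q, hq, γ, hγ, hqγ⟩ := Submodule.mem_sup.mp (h2 ▸ Submodule.mem_top : (1 : B) ∈ P ⊔ I)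
  have hγ' : ∀ g : G, g • P ≠ P → γ ∈ g • P := fun g hg ↦
    (Finset.inf_le (Finset.mem_filter.mpr ⟨Finset.mem_univ g, hg⟩) : I ≤ g • P) hγ
  let D := MulAction.stabilizer G P
  let β : B := ∏ δ : D, (δ : G) • γ
  have hβD : ∀ g : G, g • P = P → g • β = β := by
    intro g hg
    have : g • β = ∏ δ : D, ((⟨g, hg⟩ * δ : D) : G) • γ := by
      simp only [β, Finset.smul_prod', smul_smul]
      rfl
    rw [this]
    exact Equiv.prod_comp (Equiv.mulLeft (⟨g, hg⟩ : D)) (fun δ : D => (δ : G) • γ)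
  have hβP : β - 1 ∈ P := by
    rw [← Ideal.Quotient.eq, map_prod, map_one]
    refine Finset.prod_eq_one fun δ _ => ?_
    rw [← map_one (Ideal.Quotient.mk P), Ideal.Quotient.eq]
    have : (δ : G) • γ - 1 = -((δ : G) • q) := by
      have : γ = 1 - q := by rw [← hqγ]; ring
      rw [this, smul_sub, smul_one]; ring
    rw [this]
    refine P.neg_mem ?_
    have h3 : (δ : G) • P = P := δ.2
    rw [← h3]
    exact Ideal.smul_mem_pointwise_smul _ _ _ hq
  have hβn : ∀ g : G, g • P ≠ P → g • β ∈ P := by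
    intro g hg
    have h3 : γ ∈ g⁻¹ • P := hγ' g⁻¹ (fun h => hg (by rw [inv_smul_eq_iff] at h; exact h.symm))
    have h4 : β ∈ g⁻¹ • P := by
      have : β = (((1 : D) : G) • γ) * ∏ δ ∈ Finset.univ.erase (1 : D), (δ : G) • γ :=
        (Finset.mul_prod_erase _ _ (Finset.mem_univ _)).symm
      rw [this]
      refine Ideal.mul_mem_right _ _ ?_
      simpa using h3
    rwa [Ideal.mem_inv_pointwise_smul_iff] at h4
  have hone : (1 : B) ∉ P := fun h => hP.ne_top ((Ideal.eq_top_iff_one _).2 h)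
  obtain ⟨f, hf1, -, hf2⟩ := Polynomial.lifts_and_natDegree_eq_and_monic
    (f := algebraMap A B) (p := prodXSubSMul G B β)
    ((Polynomial.lifts_iff_coeff_lifts _).mpr fun n ↦
      Algebra.IsInvariant.isInvariant (G := G) _ (fun g => prodXSubSMul.coeff G B β g n))
    (prodXSubSMul.monic G B β)
  let R : Polynomial B := ∏ g ∈ (Finset.univ : Finset (G ⧸ MulAction.stabilizer G β)).erase
      (QuotientGroup.mk 1), (Polynomial.X - Polynomial.C (MulAction.ofQuotientStabilizer G β g))
  have hR : prodXSubSMul G B β = (Polynomial.X - Polynomial.C β) * R := by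
    have := (Finset.mul_prod_erase (Finset.univ : Finset (G ⧸ MulAction.stabilizer G β))
      (fun g => (Polynomial.X - Polynomial.C (MulAction.ofQuotientStabilizer G β g)))
      (Finset.mem_univ (QuotientGroup.mk 1))).symm
    rw [MulAction.ofQuotientStabilizer_mk, one_smul] at this
    rw [prodXSubSMul]
    exact this
  have hR1 : R.eval 1 ∉ P := by
    simp only [R, Polynomial.eval_prod]
    intro h
    obtain ⟨g, hg, hgP⟩ := (Ideal.IsPrime.prod_mem_iff (hp := hP.isPrime)).1 h
    induction g using QuotientGroup.induction_on with
    | H g =>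
      have hgs : g • β ≠ β := by
        intro h'
        refine (Finset.mem_erase.1 hg).1 ?_
        refine (QuotientGroup.eq.2 ?_)
        simpa [MulAction.mem_stabilizer_iff, inv_smul_eq_iff] using h'
      have : g • P ≠ P := fun h' => hgs (hβD g h')
      simp at hgP
      have h5 := P.add_mem hgP (hβn g this)
      simp at h5
      exact hone h5
  have hev : ∀ (h : Polynomial A) (a : A), algebraMap A B (h.eval a) =
      (h.map (algebraMap A B)).eval (algebraMap A B a) := by
    intro h a; simp [Polynomial.eval_map_algebraMap, Polynomial.aeval_algebraMap_apply]
  have hmem : ∀ a : A, a ∈ IsLocalRing.maximalIdeal A ↔ algebraMap A B a ∈ P := by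
    intro a; rw [← hunder P hP]; rfl
  obtain ⟨a, ha, ha1⟩ := HenselianLocalRing.is_henselian f hf2 1 (by
      rw [hmem, hev, hf1, hR, map_one, Polynomial.eval_mul]
      refine Ideal.mul_mem_right _ _ ?_
      have := P.neg_mem hβP
      simpa using this) (by
      by_contra hu
      have hu' := (IsLocalRing.mem_maximalIdeal _).2 hu
      rw [hmem, hev, ← Polynomial.derivative_map, hf1, hR, Polynomial.derivative_mul, map_one] at hu'
      simp at hu'
      have h6 : (1 - β) * (Polynomial.derivative R).eval 1 ∈ P := by
        refine Ideal.mul_mem_right _ _ ?_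
        have := P.neg_mem hβP
        simpa using this
      have := P.sub_mem hu' h6
      simp at this
      exact hR1 this)
  have h7 : (prodXSubSMul G B β).eval (algebraMap A B a) = 0 := by
    rw [← hf1, ← hev, ha.eq_zero, map_zero]
  rw [prodXSubSMul, Polynomial.eval_prod] at h7
  obtain ⟨g, -, hg⟩ := Finset.prod_eq_zero_iff.1 h7
  induction g using QuotientGroup.induction_on with
  | H g =>
    simp [sub_eq_zero] at hg
    have h8 : β = algebraMap A B a := by
      have : g⁻¹ • algebraMap A B a = β := by rw [hg, inv_smul_smul]
      rw [← this, smul_algebraMap]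
    have h9 := hβn g₀ hg₀'
    rw [h8, smul_algebraMap, ← h8] at h9
    have := P.sub_mem h9 hβP
    simp at this
    exact hone this
theorem local_uinv {B M : Type*} [CommRing B] [IsLocalRing B] [Field M] [Algebra B M]
    (hcl : ∀ y : M, IsIntegral B y → ∃ b : B, algebraMap B M b = y) (y : M) :
    ∀ (n : ℕ) (q : Polynomial B), q.natDegree ≤ n → Polynomial.aeval y q = 0 →
      (∃ i, IsUnit (q.coeff i)) → IsIntegral B y ∨ IsIntegral B y⁻¹ := by
  intro n
  induction n with
  | zero =>
    rintro q hq h0 ⟨i, hi⟩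
    exfalso
    rw [Polynomial.eq_C_of_natDegree_le_zero hq] at h0 hi
    simp at h0
    rcases i with _ | i
    · simp at hi
      have := hi.map (algebraMap B M)
      rw [h0] at this
      simp at this
    · simp at hi
  | succ n ih =>
    rintro q hq h0 ⟨i, hi⟩
    set a := q.coeff (n+1) with ha
    have hay : IsIntegral B (algebraMap B M a * y) := by
      rcases hq.lt_or_eq with h | h
      · rw [ha, Polynomial.coeff_eq_zero_of_natDegree_lt h]; simp [isIntegral_zero]
      · have := isIntegral_leadingCoeff_smul q y h0
        rwa [Polynomial.leadingCoeff, h, Algebra.smul_def] at this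
    obtain ⟨b, hb⟩ := hcl _ hay
    by_cases hau : IsUnit a
    · left
      obtain ⟨u, hu⟩ := hau
      have : y = algebraMap B M (↑u⁻¹ * b) := by
        rw [map_mul, hb, ← mul_assoc, ← map_mul, ← hu]; simp
      rw [this]; exact isIntegral_algebraMap
    by_cases hbu : IsUnit b
    · right
      obtain ⟨u, hu⟩ := hbu
      have hy : y ≠ 0 := by
        rintro rfl
        rw [mul_zero] at hb
        have := (u.isUnit).map (algebraMap B M)
        rw [hu, hb] at this
        simp at this
      have : y⁻¹ = algebraMap B M (↑u⁻¹ * a) := by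
        have h1 : algebraMap B M (↑u⁻¹ * a) * y = 1 := by
          rw [map_mul, mul_assoc, ← hb, ← map_mul, ← hu]; simp
        exact (eq_inv_of_mul_eq_one_left h1).symm
      rw [this]; exact isIntegral_algebraMap
    refine ih (q - Polynomial.C a * Polynomial.X ^ (n+1) + Polynomial.C b * Polynomial.X ^ n) ?_ ?_ ⟨i, ?_⟩
    · rw [Polynomial.natDegree_le_iff_coeff_eq_zero]
      intro N hN
      simp only [Polynomial.coeff_add, Polynomial.coeff_sub, Polynomial.coeff_C_mul_X_pow]
      rcases eq_or_ne N (n+1) with h | h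
      · simp [h, ha]
      · rw [Polynomial.coeff_eq_zero_of_natDegree_lt (by omega), if_neg h, if_neg (by omega)]; simp
    · simp [h0, hb]; ring
    · simp only [Polynomial.coeff_add, Polynomial.coeff_sub, Polynomial.coeff_C_mul_X_pow]
      have hin : i ≠ n + 1 := by rintro rfl; exact hau hi
      rw [if_neg hin, sub_zero]
      split_ifs
      · by_contra hc
        have h1 : q.coeff i + b ∈ nonunits B := hc
        have h2 : -b ∈ nonunits B := by simpa using hbu
        have := IsLocalRing.nonunits_add h1 h2
        simp at this
        exact this hi
      · simpa using hi
theorem hens_fin {A K M : Type*} [CommRing A] [IsDomain A] [ValuationRing A] [HenselianLocalRing A]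
    [Field K] [Algebra A K] [IsFractionRing A K] [Field M] [Algebra K M] [Algebra A M]
    [IsScalarTower A K M] [IsGalois K M] [FiniteDimensional K M] (y : M) :
    IsIntegral A y ∨ IsIntegral A y⁻¹ := by
  classical
  let B := integralClosure A M
  have : IsFractionRing B M := integralClosure.isFractionRing_of_finite_extension K M
  have : Algebra.IsInvariant A B (B ≃ₐ[A] B) := Algebra.isInvariant_of_isGalois' A K M B
  have : Finite (B ≃ₐ[A] B) := Finite.of_equiv _ (galRestrict A K M B).toEquiv
  have hloc : IsLocalRing B := hens_isLocal (A := A) (G := (B ≃ₐ[A] B))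
  have hBA : ∀ z : M, IsIntegral B z → IsIntegral A z := fun z hz => isIntegral_trans z hz
  have hcl : ∀ z : M, IsIntegral B z → ∃ b : B, algebraMap B M b = z :=
    fun z hz => ⟨⟨z, hBA z hz⟩, rfl⟩
  let q := minpoly K y
  have hq0 : q ≠ 0 := minpoly.ne_zero (Algebra.IsIntegral.isIntegral y)
  obtain ⟨i, hi, hmax⟩ := Finset.exists_max_image q.support
    (fun i => ValuationRing.valuation A K (q.coeff i)) (Polynomial.nonempty_support_iff.2 hq0)
  have hc : q.coeff i ≠ 0 := Polynomial.mem_support_iff.1 hi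
  have hmax' : ∀ j, ValuationRing.valuation A K (q.coeff j) ≤ ValuationRing.valuation A K (q.coeff i) := by
    intro j
    by_cases hj : q.coeff j = 0
    · rw [hj, map_zero]; exact zero_le
    · exact hmax j (Polynomial.mem_support_iff.2 hj)
  have hl : Polynomial.C (q.coeff i)⁻¹ * q ∈ Polynomial.lifts (algebraMap A K) := by
    rw [Polynomial.lifts_iff_coeff_lifts]
    intro n
    rw [Polynomial.coeff_C_mul]
    have : ValuationRing.valuation A K ((q.coeff i)⁻¹ * q.coeff n) ≤ 1 := by
      rw [map_mul, map_inv₀, mul_comm, ← div_eq_mul_inv]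
      exact div_le_one_of_le₀ (hmax' n) zero_le
    exact (ValuationRing.mem_integer_iff A K _).1 this
  obtain ⟨r, hr⟩ := (Polynomial.mem_lifts _).1 hl
  have hru : r.coeff i = 1 := by
    apply IsFractionRing.injective A K
    rw [← Polynomial.coeff_map, hr, Polynomial.coeff_C_mul, map_one, inv_mul_cancel₀ hc]
  have hry : Polynomial.aeval y r = 0 := by
    rw [← Polynomial.aeval_map_algebraMap K y r, hr]
    simp [q]
  have := local_uinv hcl y _ (r.map (algebraMap A B)) le_rfl
    (by rw [Polynomial.aeval_map_algebraMap, hry]) ⟨i, by simp [hru]⟩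
  exact this.imp (hBA _) (hBA _)

theorem hens_alg {A K F : Type*} [CommRing A] [IsDomain A] [ValuationRing A] [HenselianLocalRing A]
    [Field K] [Algebra A K] [IsFractionRing A K] [Field F] [Algebra K F] [Algebra A F]
    [IsScalarTower A K F] [Normal K F] (y : F) :
    IsIntegral A y ∨ IsIntegral A y⁻¹ := by
  obtain ⟨n, hn⟩ := IsPurelyInseparable.pow_mem (separableClosure K F) (ringExpChar K) y
  obtain ⟨⟨z, hz⟩, hzy⟩ := hn
  have hz' : z = y ^ ringExpChar K ^ n := hzy
  have hsep : IsSeparable K z := hz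
  have hpos : 0 < ringExpChar K ^ n := pow_pos (expChar_pos K _) _
  let S := separableClosure K F
  let M := FiniteGaloisIntermediateField.adjoin K ({⟨z, hz⟩} : Set S)
  let w : M := ⟨⟨z, hz⟩, FiniteGaloisIntermediateField.subset_adjoin _ _ rfl⟩
  let φ : M →ₐ[K] F := S.val.comp M.val
  let φ' : M →ₐ[A] F := φ.restrictScalars A
  have hw : φ' w = y ^ ringExpChar K ^ n := hz'
  rcases hens_fin (A := A) (K := K) w with h | h
  · left
    have := h.map φ'
    rw [hw] at this
    exact IsIntegral.of_pow hpos this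
  · right
    have := h.map φ'
    rw [map_inv₀, hw, ← inv_pow] at this
    exact IsIntegral.of_pow hpos this
theorem exists_val {A K F : Type*} [CommRing A] [IsDomain A] [ValuationRing A] [HenselianLocalRing A]
    [Field K] [Algebra A K] [IsFractionRing A K] [Field F] [Algebra K F] [Algebra A F]
    [IsScalarTower A K F] [Normal K F] :
    ∃ O : ValuationSubring F, (∀ y, O.valuation y ≤ 1 ↔ IsIntegral A y) ∧
      (∀ (τ : F ≃ₐ[K] F) (y : F), O.valuation (τ y) = O.valuation y) ∧
      (∀ a b : K, O.valuation (algebraMap K F a) ≤ O.valuation (algebraMap K F b) ↔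
        ValuationRing.valuation A K a ≤ ValuationRing.valuation A K b) := by
  let O : ValuationSubring F :=
    { (integralClosure A F).toSubring with
      mem_or_inv_mem' := fun y => hens_alg (A := A) (K := K) y }
  have hO : ∀ y, O.valuation y ≤ 1 ↔ IsIntegral A y := fun y => O.valuation_le_one_iff y
  have hdiv : ∀ a b : F, b ≠ 0 → (O.valuation a ≤ O.valuation b ↔ IsIntegral A (a / b)) := by
    intro a b hb
    rw [← hO, map_div₀, div_le_one₀ (by simpa [zero_lt_iff] using hb)]
  have hτ : ∀ (τ : F ≃ₐ[K] F) (a b : F),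
      O.valuation (τ a) ≤ O.valuation (τ b) ↔ O.valuation a ≤ O.valuation b := by
    intro τ a b
    by_cases hb : b = 0
    · simp [hb]
    · rw [hdiv _ _ hb, hdiv _ _ (by simpa using hb), ← map_div₀]
      exact isIntegral_algEquiv (τ.restrictScalars A)
  have hτ' : ∀ (τ : F ≃ₐ[K] F) (a b : F),
      O.valuation (τ a) < O.valuation (τ b) ↔ O.valuation a < O.valuation b := by
    intro τ a b
    rw [← not_le, hτ, not_le]
  refine ⟨O, hO, ?_, ?_⟩
  · intro τ y
    have hfin : ¬ Function.Injective (fun n : ℕ => (τ ^ n) y) := by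
      intro hinj
      have hne : minpoly K y ≠ 0 := minpoly.ne_zero (Normal.isIntegral inferInstance y)
      have hmem : ∀ n : ℕ, (τ ^ n) y ∈ (minpoly K y).rootSet F := by
        intro n
        rw [Polynomial.mem_rootSet]
        refine ⟨hne, ?_⟩
        rw [Polynomial.aeval_algHom_apply]
        simp
      have := Set.infinite_of_injective_forall_mem hinj hmem
      exact this ((minpoly K y).rootSet_finite F)
    have hmulp : ∀ n, (τ ^ (n+1)) y = (τ ^ n) (τ y) := fun n => by rw [pow_succ]; rfl
    rcases lt_trichotomy (O.valuation (τ y)) (O.valuation y) with h | h | h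
    · exfalso
      apply hfin
      have : StrictAnti (fun n : ℕ => O.valuation ((τ ^ n) y)) := by
        refine strictAnti_nat_of_succ_lt fun n => ?_
        rw [hmulp, hτ']; exact h
      exact fun a b hab => this.injective (congrArg O.valuation hab)
    · exact h
    · exfalso
      apply hfin
      have : StrictMono (fun n : ℕ => O.valuation ((τ ^ n) y)) := by
        refine strictMono_nat_of_lt_succ fun n => ?_
        rw [hmulp, hτ']; exact h
      exact fun a b hab => this.injective (congrArg O.valuation hab)
  · intro a b
    by_cases hb : b = 0
    · simp [hb]
    · rw [hdiv _ _ (by simpa using hb), ← map_div₀,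
        isIntegral_algebraMap_iff (FaithfulSMul.algebraMap_injective K F),
        IsIntegrallyClosed.isIntegral_iff, ← div_le_one₀ (by simpa [zero_lt_iff] using hb), ← map_div₀]
      exact (ValuationRing.mem_integer_iff A K _).symm

theorem exists_as {K L : Type*} [Field K] [Field L] [Algebra K L] (p : ℕ) (hp : p.Prime) [CharP L p]
    (σ : L ≃ₐ[K] L) (hσ : σ ^ p = 1) (hσ1 : σ ≠ 1) : ∃ α : L, σ α = α + 1 := by
  classical
  have : Fact p.Prime := ⟨hp⟩
  let δ : Module.End K L := σ.toLinearMap - 1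
  have hδ : ∀ x, δ x = σ x - x := fun x => rfl
  have hchar : CharP (Module.End K L) p := by
    have : CharP K p := (Algebra.charP_iff K L p).2 inferInstance
    exact charP_of_injective_algebraMap (FaithfulSMul.algebraMap_injective K (Module.End K L)) p
  have hpow : ∀ n : ℕ, (σ.toLinearMap : Module.End K L) ^ n = (σ ^ n).toLinearMap := by
    intro n
    induction n with
    | zero => rfl
    | succ n ih => rw [pow_succ, ih, pow_succ]; rfl
  have hδp : δ ^ p = 0 := by
    rw [sub_pow_char_of_commute _ (Commute.one_right _), one_pow, hpow, hσ]
    ext x; simp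
  obtain ⟨x, hx⟩ : ∃ x, σ x ≠ x := by
    by_contra! h
    exact hσ1 (AlgEquiv.ext h)
  have hex : ∃ n, (δ ^ n) x = 0 := ⟨p, by rw [hδp]; rfl⟩
  have hn := Nat.find_spec hex
  have hmin := fun m => Nat.find_min hex (m := m)
  generalize Nat.find hex = n at hn hmin
  rcases n with _ | _ | n
  · simp at hn; rw [hn] at hx; simp at hx
  · simp [hδ, sub_eq_zero] at hn; exact absurd hn hx
  · have hz := hmin (n+1) (by omega)
    rw [pow_succ', Module.End.mul_apply, hδ, sub_eq_zero] at hn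
    refine ⟨(δ ^ n) x / (δ ^ (n+1)) x, ?_⟩
    rw [map_div₀, hn]
    have h1 : (δ ^ (n+1)) x = σ ((δ ^ n) x) - (δ ^ n) x := by
      rw [pow_succ', Module.End.mul_apply, hδ]
    have h2 : σ ((δ ^ n) x) = (δ ^ n) x + (δ ^ (n+1)) x := by rw [h1]; ring
    rw [h2, add_div, div_self hz]

theorem exists_poly {K L : Type*} [Field K] [Field L] [Algebra K L] [FiniteDimensional K L]
    (p : ℕ) (hp : p.Prime) (hpd : Module.finrank K L = p) (α : L)
    (hα : ∀ k : K, algebraMap K L k ≠ α) (x : L) :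
    ∃ g : Polynomial K, g.natDegree < p ∧ Polynomial.aeval α g = x := by
  have htop : IntermediateField.adjoin K {α} = ⊤ := by
    have := IntermediateField.isSimpleOrder_of_finrank_prime K L (hpd ▸ hp)
    rcases eq_bot_or_eq_top (IntermediateField.adjoin K {α}) with h | h
    · exfalso
      rw [IntermediateField.adjoin_simple_eq_bot_iff, IntermediateField.mem_bot] at h
      obtain ⟨k, hk⟩ := h
      exact hα k hk
    · exact h
  have hint : IsIntegral K α := Algebra.IsIntegral.isIntegral α
  have hx : x ∈ (IntermediateField.adjoin K {α}).toSubalgebra := by rw [htop]; trivial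
  rw [IntermediateField.adjoin_simple_toSubalgebra_of_isAlgebraic hint.isAlgebraic,
    Algebra.adjoin_singleton_eq_range_aeval] at hx
  obtain ⟨r, hr⟩ := hx
  refine ⟨r %ₘ minpoly K α, ?_, ?_⟩
  · refine lt_of_lt_of_le (Polynomial.natDegree_modByMonic_lt _ (minpoly.monic hint) (minpoly.ne_one K α)) ?_
    rw [← hpd]; exact minpoly.natDegree_le α
  · rw [← hr]
    exact Polynomial.aeval_modByMonic_eq_self_of_root (minpoly.aeval K α)
theorem val_prod_sub_one {F Γ : Type*} [Field F] [LinearOrderedCommGroupWithZero Γ]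
    (v : Valuation F Γ) (r : Γ) (hr : r ≤ 1) (s : Multiset F) (h : ∀ t ∈ s, v t ≤ r) :
    v ((s.map (fun t => 1 + t)).prod - 1) ≤ r := by
  induction s using Multiset.induction_on with
  | empty => simp
  | cons a s ih =>
    have h1 := ih (fun t ht => h t (Multiset.mem_cons_of_mem ht))
    have h2 := h a (Multiset.mem_cons_self a s)
    rw [Multiset.map_cons, Multiset.prod_cons]
    set P := (s.map (fun t => 1 + t)).prod
    have : (1 + a) * P - 1 = (P - 1) + a * ((P - 1) + 1) := by ring
    rw [this]
    refine (v.map_add_le h1 ?_)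
    rw [map_mul]
    have h3 : v (P - 1 + 1) ≤ 1 := v.map_add_le (h1.trans hr) (by simp)
    calc v a * v (P - 1 + 1) ≤ r * 1 := mul_le_mul' h2 h3
      _ = r := mul_one r

theorem val_msum_le {F Γ : Type*} [Field F] [LinearOrderedCommGroupWithZero Γ]
    (v : Valuation F Γ) (r : Γ) (s : Multiset F) (h : ∀ t ∈ s, v t ≤ r) : v s.sum ≤ r := by
  induction s using Multiset.induction_on with
  | empty => simp
  | cons a s ih =>
    rw [Multiset.sum_cons]
    exact v.map_add_le (h a (Multiset.mem_cons_self a s))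
      (ih (fun t ht => h t (Multiset.mem_cons_of_mem ht)))

theorem val_nat_le {F Γ : Type*} [Field F] [LinearOrderedCommGroupWithZero Γ]
    (v : Valuation F Γ) (n : ℕ) : v (n : F) ≤ 1 := by
  induction n with
  | zero => simp
  | succ n ih => push_cast; exact v.map_add_le ih (by simp)

theorem approx_root {K F Γ : Type*} [Field K] [Field F] [Algebra K F] [IsAlgClosed F] [Normal K F]
    [LinearOrderedCommGroupWithZero Γ] (v : Valuation F Γ)
    (hinv : ∀ (τ : F ≃ₐ[K] F) (y : F), v (τ y) = v y)
    (p : ℕ) (hp : p.Prime) [CharP F p] (a : F)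
    (haut : ∀ τ : F ≃ₐ[K] F, v (τ a - a) ≤ 1)
    (hbig : ∀ h : K, 1 < v (a - algebraMap K F h))
    (c : F) (hc : (minpoly K c).natDegree < p) :
    ∃ h : K, v (a - algebraMap K F h) ≤ v (a - c) := by
  classical
  have hint : IsIntegral K c := Normal.isIntegral inferInstance c
  set P := minpoly K c with hP
  have hmon : P.Monic := minpoly.monic hint
  have hm0 : 0 < P.natDegree := minpoly.natDegree_pos hint
  set m := P.natDegree
  have hspl : (P.map (algebraMap K F)).Splits := IsAlgClosed.splits _
  set R := (P.map (algebraMap K F)).roots with hR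
  have hcard : R.card = m := by
    rw [hR, ← hspl.natDegree_eq_card_roots, Polynomial.natDegree_map]
  have hsum : R.sum = - algebraMap K F P.nextCoeff := by
    have := hspl.nextCoeff_eq_neg_sum_roots_of_monic (hmon.map _)
    rw [Polynomial.nextCoeff_map (FaithfulSMul.algebraMap_injective K F)] at this
    rw [this, neg_neg]
  have hcop : Nat.Coprime m p :=
    (Nat.coprime_of_lt_prime hm0.ne' hc hp).symm
  obtain ⟨j, hj⟩ : ∃ j : ℕ, (j : F) * (m : F) = 1 := by
    obtain ⟨j, hj⟩ := Nat.exists_mul_mod_eq_one_of_coprime hcop hp.one_lt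
    refine ⟨j, ?_⟩
    have := (CharP.cast_eq_iff_mod_eq F p (a := m * j) (b := 1)).2 (by rw [hj.2, Nat.mod_eq_of_lt hp.one_lt])
    push_cast at this
    rw [mul_comm]; exact this
  let h : K := (j : K) * (- P.nextCoeff)
  have hah : a - algebraMap K F h = (j : F) * (R.map (fun c' => a - c')).sum := by
    rw [Multiset.sum_map_sub, Multiset.map_id', Multiset.map_const', Multiset.sum_replicate, hcard, hsum]
    simp only [h, map_mul, map_neg, map_natCast, nsmul_eq_mul, mul_sub, ← mul_assoc, hj, one_mul]
  have hle : v (a - algebraMap K F h) ≤ max (v (a - c)) 1 := by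
    rw [hah, map_mul]
    refine (mul_le_mul' (val_nat_le v j) (val_msum_le v (max (v (a - c)) 1) _ ?_)).trans (one_mul _).le
    intro t ht
    obtain ⟨c', hc', rfl⟩ := Multiset.mem_map.1 ht
    have hroot : Polynomial.aeval c' P = 0 := by
      have := (Polynomial.mem_roots'.1 hc').2
      rwa [Polynomial.IsRoot, Polynomial.eval_map_algebraMap] at this
    obtain ⟨τ, hτ⟩ := minpoly.exists_algEquiv_of_root' hint.isAlgebraic hroot
    have : a - c' = τ (a - c) - (τ a - a) := by rw [map_sub, hτ]; ring
    rw [this]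
    refine (v.map_sub _ _).trans (max_le_max ?_ (haut τ))
    rw [hinv]
  refine ⟨h, ?_⟩
  rcases le_max_iff.1 hle with h1 | h1
  · exact h1
  · exact absurd h1 (not_le.2 (hbig h))
set_option synthInstance.maxHeartbeats 400000

open ValuationRing

/-- Let `A` be a Henselian valuation ring of characteristic `p > 0` which is not a field,
with fraction field `K`, and let `L/K` be a cyclic Galois extension of degree `p` with `B`
the integral closure of `A` in `L`.  Let `σ` be a generator of `Gal(L/K)`, let
`J_σ ⊆ B` be the ideal generated by the elements `σ(x)·x⁻¹ − 1` (`x ∈ Lˣ`), and let `H ⊆ A`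
be the associated ideal, generated by the norms of elements of `J_σ`; assume `H ≠ A`.
Let `C := {v_A(x) : x ∈ H, x ≠ 0}` (inside `ValuationRing.ValueGroup A K`, whose
multiplicative order is opposite to the additive order of values: `γ ≤ γ'` here iff
`γ ≥ γ'` additively, and `p·d ∈ C`, `p·d ≤ c` additively become `d^p ∈ C`, `c ≤ d^p`).
Then either `C` has an additively least element, or for every `c ∈ C` there is `d` in the
value group with `p·d ∈ C` and `p·d ≤ c` additively. -/
theorem assoc_ideal_value_set_min_or_p_divisible
    {A K L : Type*} [CommRing A] [IsDomain A] [ValuationRing A] [HenselianLocalRing A]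
    (hA : ¬IsField A)
    [Field K] [Algebra A K] [IsFractionRing A K]
    (p : ℕ) (hp : p.Prime) [CharP A p]
    [Field L] [Algebra K L] [Algebra A L] [IsScalarTower A K L]
    [IsGalois K L] [FiniteDimensional K L]
    [IsCyclic (L ≃ₐ[K] L)] (hcard : Nat.card (L ≃ₐ[K] L) = p)
    (σ : L ≃ₐ[K] L) (hσ : ∀ τ : L ≃ₐ[K] L, τ ∈ Subgroup.zpowers σ)
    (Jσ : Ideal ↥(integralClosure A L))
    (hJσ : Jσ = Ideal.span
      {b : ↥(integralClosure A L) | ∃ x : Lˣ, (b : L) = σ (x : L) * (x : L)⁻¹ - 1})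
    (H : Ideal A)
    (hH : H = Ideal.span
      {a : A | ∃ b ∈ Jσ, algebraMap A K a = Algebra.norm K ((b : L))})
    (hHne : H ≠ ⊤)
    (C : Set (ValueGroup A K))
    (hC : C = {γ : ValueGroup A K | ∃ a ∈ H, a ≠ 0 ∧ valuation A K (algebraMap A K a) = γ}) :
    (∃ c ∈ C, ∀ c' ∈ C, c' ≤ c) ∨
      ∀ c ∈ C, ∃ d : ValueGroup A K, d ≠ 0 ∧ d ^ p ∈ C ∧ c ≤ d ^ p := by
  classical
  have : Fact p.Prime := ⟨hp⟩
  have hKA : Function.Injective (algebraMap A K) := IsFractionRing.injective A K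
  have : CharP K p := charP_of_injective_algebraMap hKA p
  have : CharP L p := charP_of_injective_algebraMap (FaithfulSMul.algebraMap_injective K L) p
  let F := AlgebraicClosure L
  have : CharP F p := charP_of_injective_algebraMap (FaithfulSMul.algebraMap_injective L F) p
  have : Algebra.IsAlgebraic K F := Algebra.IsAlgebraic.trans K L F
  have : IsAlgClosure K F := ⟨inferInstance, inferInstance⟩
  have : Normal K F := IsAlgClosure.normal K F
  obtain ⟨O, hO, hinv, hK⟩ := exists_val (A := A) (K := K) (F := F)
  generalize O.valuation = v at hO hinv hK
  have hpc : σ ^ p = 1 := by rw [← hcard]; exact pow_card_eq_one'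
  have hσ1 : σ ≠ 1 := by
    rintro rfl
    have hsub : ∀ τ : L ≃ₐ[K] L, τ = 1 := by
      intro τ; have := hσ τ; simpa using this
    have : Subsingleton (L ≃ₐ[K] L) := ⟨fun a b => (hsub a).trans (hsub b).symm⟩
    rw [Nat.card_of_subsingleton (1 : L ≃ₐ[K] L)] at hcard
    exact hp.one_lt.ne hcard
  obtain ⟨α, hα⟩ := exists_as p hp σ hpc hσ1
  have hpd : Module.finrank K L = p := by rw [← IsGalois.card_aut_eq_finrank, hcard]
  have hαK : ∀ k : K, algebraMap K L k ≠ α := by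
    rintro k rfl
    simp at hα
  have hαne : ∀ k : K, α - algebraMap K L k ≠ 0 := fun k h => hαK k (sub_eq_zero.1 h).symm
  -- valuation on L
  let w : Valuation L _ := v.comap (algebraMap L F)
  have hw : ∀ y : L, w y = v (algebraMap L F y) := fun y => rfl
  have hwinv : ∀ (τ : L ≃ₐ[K] L) (y : L), w (τ y) = w y := by
    intro τ y
    rw [hw, hw, ← AlgEquiv.liftNormal_commutes τ F y, hinv]
  have hwint : ∀ y : L, w y ≤ 1 ↔ IsIntegral A y := by
    intro y
    rw [hw, hO, isIntegral_algebraMap_iff (FaithfulSMul.algebraMap_injective L F)]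
  have hwK : ∀ a b : K, w (algebraMap K L a) ≤ w (algebraMap K L b) ↔
      valuation A K a ≤ valuation A K b := by
    intro a b
    rw [hw, hw, ← IsScalarTower.algebraMap_apply, ← IsScalarTower.algebraMap_apply]
    exact hK a b
  have hnorm : ∀ y : L, w (algebraMap K L (Algebra.norm K y)) = w y ^ p := by
    intro y
    rw [Algebra.norm_eq_prod_automorphisms, map_prod, Finset.prod_congr rfl (fun τ _ => hwinv τ y),
      Finset.prod_const, Finset.card_univ, ← Nat.card_eq_fintype_card, hcard]
  have hinvle : ∀ k : K, w (α - algebraMap K L k)⁻¹ ≤ 1 := by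
    intro k
    have h1 : w (σ (α - algebraMap K L k) * (α - algebraMap K L k)⁻¹) ≤ 1 := by
      rw [map_mul, hwinv, ← map_mul, mul_inv_cancel₀ (hαne k), map_one]
    have h2 : (α - algebraMap K L k)⁻¹ =
        σ (α - algebraMap K L k) * (α - algebraMap K L k)⁻¹ - 1 := by
      have := hαne k
      rw [map_sub, hα, AlgEquiv.commutes]
      field_simp
      ring
    rw [h2]
    exact (w.map_sub _ _).trans (max_le h1 (by simp))
  have hJmem : ∀ (k : K), (⟨(α - algebraMap K L k)⁻¹, (hwint _).1 (hinvle k)⟩ :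
      integralClosure A L) ∈ Jσ := by
    intro k
    rw [hJσ]
    refine Ideal.subset_span ⟨Units.mk0 _ (hαne k), ?_⟩
    have := hαne k
    simp only [Units.val_mk0]
    rw [map_sub, hα, AlgEquiv.commutes]
    field_simp
    ring
  have hbig : ∀ k : K, 1 < w (α - algebraMap K L k) := by
    intro k
    by_contra hle
    rw [not_lt, hwint] at hle
    apply hHne
    have h1 : (1 : integralClosure A L) ∈ Jσ := by
      have := Jσ.mul_mem_left ⟨_, hle⟩ (hJmem k)
      convert this using 1
      ext
      simp [mul_inv_cancel₀ (hαne k)]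
    rw [Ideal.eq_top_iff_one, hH]
    exact Ideal.subset_span ⟨1, h1, by simp⟩
  have haut : ∀ τ : F ≃ₐ[K] F, v (τ (algebraMap L F α) - algebraMap L F α) ≤ 1 := by
    have hfix : σ (α ^ p - α) = α ^ p - α := by
      rw [map_sub, map_pow, hα, add_pow_char]; ring
    have hf : ∃ f : K, algebraMap K L f = α ^ p - α := by
      have : α ^ p - α ∈ (⊥ : IntermediateField K L) := by
        rw [IsGalois.mem_bot_iff_fixed]
        intro τ
        obtain ⟨n, rfl⟩ := Subgroup.mem_zpowers_iff.1 (hσ τ)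
        have : σ ∈ MulAction.stabilizer (L ≃ₐ[K] L) (α ^ p - α) := hfix
        exact Subgroup.zpow_mem _ this n
      exact IntermediateField.mem_bot.1 this
    obtain ⟨f, hf⟩ := hf
    intro τ
    have h1 : (algebraMap L F α) ^ p - algebraMap L F α = algebraMap K F f := by
      rw [IsScalarTower.algebraMap_apply K L F, hf, map_sub, map_pow]
    have h2 : (τ (algebraMap L F α)) ^ p - τ (algebraMap L F α) = algebraMap K F f := by
      rw [← map_pow, ← map_sub, h1, AlgEquiv.commutes]
    set t := τ (algebraMap L F α) - algebraMap L F α with ht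
    have h3 : t ^ p = t := by
      rw [ht, sub_pow_char]
      linear_combination h2 - h1
    by_contra hlt
    rw [not_le] at hlt
    have h4 : v t ^ p = v t := by rw [← map_pow, h3]
    exact (lt_self_pow₀ hlt hp.one_lt).ne h4.symm
  have hkey : ∀ x : L, x ≠ 0 → ∃ k : K, w (σ x * x⁻¹ - 1) ≤ w (α - algebraMap K L k)⁻¹ := by
    intro x hx
    obtain ⟨g, hgd, hgx⟩ := exists_poly p hp hpd α hαK x
    have hg0 : g ≠ 0 := by rintro rfl; simp at hgx; exact hx hgx.symm
    have hcl : ∀ c ∈ (g.map (algebraMap K F)).roots, ∃ k : K,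
        w (α - algebraMap K L k) ≤ v (algebraMap L F α - c) := by
      intro c hc
      obtain ⟨k, hk⟩ := approx_root (K := K) v hinv p hp (algebraMap L F α) haut
        (fun k => by
          have := hbig k
          rwa [hw, map_sub, ← IsScalarTower.algebraMap_apply] at this) c (by
          refine lt_of_le_of_lt (Polynomial.natDegree_le_of_dvd (minpoly.dvd K c ?_) hg0) hgd
          have := (Polynomial.mem_roots'.1 hc).2
          rwa [Polynomial.IsRoot, Polynomial.eval_map_algebraMap] at this)
      refine ⟨k, ?_⟩
      rwa [hw, map_sub, ← IsScalarTower.algebraMap_apply]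
    have hall : ∀ s : Multiset F, (∀ c ∈ s, ∃ k : K,
        w (α - algebraMap K L k) ≤ v (algebraMap L F α - c)) → ∃ k : K, ∀ c ∈ s,
        w (α - algebraMap K L k) ≤ v (algebraMap L F α - c) := by
      intro s
      induction s using Multiset.induction_on with
      | empty => intro _; exact ⟨0, by simp⟩
      | cons c s ih =>
        intro h
        obtain ⟨k1, hk1⟩ := h c (Multiset.mem_cons_self _ _)
        obtain ⟨k2, hk2⟩ := ih (fun c hc => h c (Multiset.mem_cons_of_mem hc))
        rcases le_total (w (α - algebraMap K L k1)) (w (α - algebraMap K L k2)) with hle | hle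
        · refine ⟨k1, fun d hd => ?_⟩
          rcases Multiset.mem_cons.1 hd with rfl | hd
          · exact hk1
          · exact hle.trans (hk2 d hd)
        · refine ⟨k2, fun d hd => ?_⟩
          rcases Multiset.mem_cons.1 hd with rfl | hd
          · exact hle.trans hk1
          · exact hk2 d hd
    obtain ⟨k, hk⟩ := hall _ hcl
    refine ⟨k, ?_⟩
    set s := (g.map (algebraMap K F)).roots with hs
    set lc := algebraMap K F g.leadingCoeff with hlc
    have hlc0 : lc ≠ 0 := by simpa [hlc] using hg0
    have hev : ∀ y : L, algebraMap L F (Polynomial.aeval y g) =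
        lc * (s.map (fun c => algebraMap L F y - c)).prod := by
      intro y
      have hspl : (g.map (algebraMap K F)).Splits := IsAlgClosed.splits _
      have h1 := congrArg (Polynomial.eval (algebraMap L F y)) hspl.eq_prod_roots
      rw [Polynomial.eval_map_algebraMap, Polynomial.aeval_algebraMap_apply] at h1
      rw [h1, Polynomial.eval_mul, Polynomial.eval_C, Polynomial.leadingCoeff_map,
        Polynomial.eval_multiset_prod, Multiset.map_map]
      simp [hs, hlc]
    have hσx : σ x = Polynomial.aeval (α + 1) g := by
      rw [← hgx, ← hα, Polynomial.aeval_algHom_apply]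
    have hcne : ∀ c ∈ s, algebraMap L F α - c ≠ 0 := by
      intro c hc h0
      have := hk c hc
      rw [h0, map_zero] at this
      exact absurd (this.trans zero_le) (not_le.2 ((zero_lt_one).trans (hbig k)))
    have hprod : algebraMap L F (σ x * x⁻¹) =
        ((s.map (fun c => (algebraMap L F α - c)⁻¹)).map (fun t => 1 + t)).prod := by
      have hx' : algebraMap L F x ≠ 0 := by simpa using hx
      rw [map_mul, map_inv₀, ← div_eq_mul_inv, div_eq_iff hx', hσx, hev]
      conv_rhs => rw [← hgx, hev]
      rw [mul_left_comm, Multiset.map_map, ← Multiset.prod_map_mul]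
      congr 2
      refine Multiset.map_congr rfl fun c hc => ?_
      have := hcne c hc
      simp only [Function.comp, map_add, map_one]
      rw [add_mul, one_mul, inv_mul_cancel₀ this]
      ring
    rw [hw, map_sub, map_one, hprod]
    refine val_prod_sub_one v _ (hinvle k) _ ?_
    intro t ht
    obtain ⟨c, hc, rfl⟩ := Multiset.mem_map.1 ht
    rw [map_inv₀, map_inv₀]
    exact inv_anti₀ ((zero_lt_one).trans (hbig k)) (hk c hc)
  have hJ : ∀ b ∈ Jσ, ∃ k : K, w (b : L) ≤ w (α - algebraMap K L k)⁻¹ := by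
    intro b hb
    rw [hJσ] at hb
    induction hb using Submodule.span_induction with
    | mem b hb =>
      obtain ⟨x, hx⟩ := hb
      rw [hx]
      exact hkey x x.ne_zero
    | zero => exact ⟨0, by simp⟩
    | add a b _ _ iha ihb =>
      obtain ⟨k1, h1⟩ := iha
      obtain ⟨k2, h2⟩ := ihb
      rcases le_total (w (α - algebraMap K L k1)⁻¹) (w (α - algebraMap K L k2)⁻¹) with hle | hle
      · exact ⟨k2, w.map_add_le (h1.trans hle) h2⟩
      · exact ⟨k1, w.map_add_le h1 (h2.trans hle)⟩
    | smul a b _ ih =>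
      obtain ⟨k, h⟩ := ih
      refine ⟨k, ?_⟩
      have ha : w (a : L) ≤ 1 := (hwint _).2 a.2
      have : ((a • b : integralClosure A L) : L) = (a : L) * (b : L) := rfl
      rw [this, map_mul]
      exact (mul_le_mul' ha h).trans (one_mul _).le
  have hHb : ∀ a ∈ H, ∃ k : K, valuation A K (algebraMap A K a) ≤
      valuation A K (Algebra.norm K (α - algebraMap K L k)⁻¹) := by
    intro a ha
    rw [hH] at ha
    induction ha using Submodule.span_induction with
    | mem a ha =>
      obtain ⟨b, hb, hab⟩ := ha
      obtain ⟨k, hk⟩ := hJ b hb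
      refine ⟨k, ?_⟩
      rw [hab, ← hwK, hnorm, hnorm]
      exact pow_le_pow_left' hk p
    | zero => exact ⟨0, by simp⟩
    | add a b _ _ iha ihb =>
      obtain ⟨k1, h1⟩ := iha
      obtain ⟨k2, h2⟩ := ihb
      rw [map_add]
      rcases le_total (valuation A K (Algebra.norm K (α - algebraMap K L k1)⁻¹))
        (valuation A K (Algebra.norm K (α - algebraMap K L k2)⁻¹)) with hle | hle
      · exact ⟨k2, (valuation A K).map_add_le (h1.trans hle) h2⟩
      · exact ⟨k1, (valuation A K).map_add_le h1 (h2.trans hle)⟩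
    | smul a b _ ih =>
      obtain ⟨k, h⟩ := ih
      refine ⟨k, ?_⟩
      have ha : valuation A K (algebraMap A K a) ≤ 1 :=
        (ValuationRing.mem_integer_iff A K _).2 ⟨a, rfl⟩
      rw [smul_eq_mul, map_mul, map_mul]
      exact (mul_le_mul' ha h).trans (one_mul _).le
  have hCb : ∀ c ∈ C, ∃ k : K, c ≤ valuation A K (Algebra.norm K (α - algebraMap K L k)⁻¹) := by
    intro c hc
    rw [hC] at hc
    obtain ⟨a, ha, -, rfl⟩ := hc
    exact hHb a ha
  have hCm : ∀ k : K, valuation A K (Algebra.norm K (α - algebraMap K L k)⁻¹) ∈ C := by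
    intro k
    have hle : valuation A K (Algebra.norm K (α - algebraMap K L k)⁻¹) ≤ 1 := by
      rw [← map_one (valuation A K), ← hwK, hnorm, map_one, map_one]
      exact pow_le_one' (hinvle k) p
    obtain ⟨a, ha⟩ := (ValuationRing.mem_integer_iff A K _).1 hle
    rw [hC]
    refine ⟨a, ?_, ?_, by rw [ha]⟩
    · rw [hH]
      exact Ideal.subset_span ⟨_, hJmem k, ha⟩
    · rintro rfl
      rw [map_zero] at ha
      have := Algebra.norm_eq_zero_iff.1 ha.symm
      exact inv_ne_zero (hαne k) this
  by_cases hmax : ∃ c ∈ C, ∀ c' ∈ C, c' ≤ c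
  · exact Or.inl hmax
  right
  push Not at hmax
  intro c hc
  obtain ⟨k1, hk1⟩ := hCb c hc
  obtain ⟨c', hc', hlt⟩ := hmax _ (hCm k1)
  obtain ⟨k2, hk2⟩ := hCb c' hc'
  have hlt2 := hlt.trans_le hk2
  rw [← not_le, ← hwK, not_le, hnorm, hnorm] at hlt2
  have hlt3 : w (α - algebraMap K L k1)⁻¹ < w (α - algebraMap K L k2)⁻¹ :=
    lt_of_pow_lt_pow_left₀ p zero_le hlt2
  rw [map_inv₀, map_inv₀] at hlt3
  have hlt4 : w (α - algebraMap K L k2) < w (α - algebraMap K L k1) :=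
    (inv_lt_inv₀ ((zero_lt_one).trans (hbig k1)) ((zero_lt_one).trans (hbig k2))).1 hlt3
  have heq : w (algebraMap K L (k2 - k1)) = w (α - algebraMap K L k1) := by
    rw [← w.map_sub_eq_of_lt_right hlt4, map_sub, ← w.map_neg]
    congr 1; ring
  have hk0 : k2 - k1 ≠ 0 := by
    intro h0
    rw [h0, map_zero, map_zero] at heq
    exact absurd heq ((zero_lt_one).trans (hbig k1)).ne
  have hd : valuation A K (k2 - k1)⁻¹ ^ p =
      valuation A K (Algebra.norm K (α - algebraMap K L k1)⁻¹) := by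
    rw [← map_pow]
    have : w (algebraMap K L ((k2 - k1)⁻¹ ^ p)) =
        w (algebraMap K L (Algebra.norm K (α - algebraMap K L k1)⁻¹)) := by
      rw [hnorm, map_pow, map_pow, map_inv₀, map_inv₀, map_inv₀, heq]
    exact le_antisymm ((hwK _ _).1 this.le) ((hwK _ _).1 this.ge)
  refine ⟨valuation A K (k2 - k1)⁻¹, ?_, ?_, ?_⟩
  · simpa using hk0
  · rw [hd]; exact hCm k1
  · rw [hd]; exact hk1
end

section
/- Let p be a prime number, let Γ be a nonzero subgroup of the additive group ℝ which is not isomorphic to ℤ, and let a ∈ Γ with a > 0. Then there exist a field K of characteristic p, a Henselian valuation ring A with field of fractions K, a surjective valuation v : Kˣ → Γ (i.e. v(xy) = v(x) + v(y) and v(x + y) ≥ min(v(x), v(y)) whenever defined) with A = {0} ∪ {x ∈ Kˣ : v(x) ≥ 0}, and a cyclic Galois extension L/K of degree p, such that {v(x) : x ∈ H, x ≠ 0} = {γ ∈ Γ : γ ≥ a}, where H is the ideal of A associated to L/K. -/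
set_option synthInstance.maxHeartbeats 400000
set_option linter.unusedVariables false

/-- `H` is the ideal of `A` associated to a cyclic extension `L/K` of prime degree:
for any generator `σ` of `Gal(L/K)`, `H` is generated by the elements `a` of `A` whose image
in `K` is the norm of an element of the ideal `J_σ` of the integral closure `B` of `A` in `L`
generated by the elements `σ(x)·x⁻¹ − 1`, `x ∈ Lˣ`. -/
def IsAssociatedIdeal {K : Type} [Field K] (A : ValuationSubring K)
    (L : Type) [Field L] [Algebra K L] (H : Ideal ↥A) : Prop :=
  ∀ [instAL : Algebra ↥A L] [instTower : IsScalarTower ↥A K L] (σ : L ≃ₐ[K] L),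
    (∀ τ : L ≃ₐ[K] L, τ ∈ Subgroup.zpowers σ) →
    H = Ideal.span {a : ↥A |
      ∃ b ∈ Ideal.span {b : ↥(integralClosure ↥A L) |
          ∃ x : Lˣ, (b : L) = σ (x : L) * (x : L)⁻¹ - 1},
        algebraMap ↥A K a = Algebra.norm K ((b : L))}


section
open HahnSeries
open HahnSeries

def hahnSub (G k : Type) [AddCommGroup G] [LinearOrder G] [IsOrderedAddMonoid G] [Field k] :
    ValuationSubring (HahnSeries G k) where
  carrier := {f | 0 ≤ f.orderTop}
  mul_mem' := by
    intro a b ha hb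
    simp only [Set.mem_ofPred_eq] at *
    rw [orderTop_mul]
    exact add_nonneg ha hb
  one_mem' := by simp
  add_mem' := by
    intro a b ha hb
    simp only [Set.mem_ofPred_eq] at *
    exact le_trans (le_min ha hb) min_orderTop_le_orderTop_add
  zero_mem' := by simp
  neg_mem' := by
    intro a ha
    simp only [Set.mem_ofPred_eq] at *
    simpa using ha
  mem_or_inv_mem' := by
    intro x
    simp only [Set.mem_ofPred_eq]
    by_cases hx : x = 0
    · simp [hx]
    by_contra! h
    have h1 : (x * x⁻¹).orderTop = 0 := by rw [mul_inv_cancel₀ hx]; simp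
    rw [orderTop_mul] at h1
    have h4 : x.orderTop + x⁻¹.orderTop < 0 := by
      have h5 := WithTop.add_lt_add_right (ne_top_of_lt h.1) h.2
      first
        | exact (by simpa using h5.trans_le (by simpa using h.1.le))
        | exact h5.trans_le (by simpa using h.1.le)
        | (rw [add_comm]; exact h5.trans_le (by simpa using h.1.le))
    rw [h1] at h4
    exact lt_irrefl _ h4

theorem mem_hahnSub {G k : Type} [AddCommGroup G] [LinearOrder G] [IsOrderedAddMonoid G] [Field k]
    (f : HahnSeries G k) : f ∈ hahnSub G k ↔ 0 ≤ f.orderTop := Iff.rfl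

theorem hahn_limit {G k : Type} [AddCommGroup G] [LinearOrder G] [IsOrderedAddMonoid G] [Field k]
    [Archimedean G] (g : G) (hg : 0 < g) (f : ℕ → HahnSeries G k)
    (hf : ∀ m n, m ≤ n → ∀ γ < m • g, (f m).coeff γ = (f n).coeff γ) :
    ∃ F : HahnSeries G k, ∀ n, ∀ γ < n • g, F.coeff γ = (f n).coeff γ := by
  have hN : ∀ γ : G, ∃ n : ℕ, γ < n • g := fun γ => exists_lt_nsmul hg γ
  choose N hN using hN
  have key : ∀ n, ∀ γ < n • g, (f (N γ)).coeff γ = (f n).coeff γ := by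
    intro n γ h
    rcases le_total (N γ) n with h1 | h1
    · exact hf _ _ h1 γ (hN γ)
    · exact (hf _ _ h1 γ h).symm
  refine ⟨⟨fun γ => (f (N γ)).coeff γ, ?_⟩, key⟩
  apply Set.IsWF.isPWO
  rw [Set.isWF_iff_no_descending_seq]
  intro s hs hmem
  have h2 := (f (N (s 0))).isWF_support
  rw [Set.isWF_iff_no_descending_seq] at h2
  refine h2 s hs fun i => ?_
  have h3 := hmem i
  rw [Function.mem_support] at h3
  rw [key (N (s 0)) (s i) ((hs.antitone (Nat.zero_le i)).trans_lt (hN (s 0)))] at h3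
  exact h3

theorem le_orderTop_iff' {G k : Type} [LinearOrder G] [Zero k]
    (f : HahnSeries G k) (g : G) : (g : WithTop G) ≤ f.orderTop ↔ ∀ γ < g, f.coeff γ = 0 := by
  constructor
  · intro h γ hγ
    apply coeff_eq_zero_of_lt_orderTop
    exact lt_of_lt_of_le (WithTop.coe_lt_coe.2 hγ) h
  · intro h
    by_contra! h2
    have hne : f ≠ 0 := by rintro rfl; simp at h2
    obtain ⟨i, hi⟩ := WithTop.ne_top_iff_exists.1 (orderTop_ne_top.2 hne)
    rw [← hi] at h2
    have := h i (WithTop.coe_lt_coe.1 h2)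
    exact coeff_orderTop_ne hi.symm this

theorem hahn_mem_pow {G k : Type} [AddCommGroup G] [LinearOrder G] [IsOrderedAddMonoid G] [Field k]
    (π : hahnSub G k) (g : G) (hπ : (π : HahnSeries G k).orderTop = g) (n : ℕ)
    (x : hahnSub G k) :
    x ∈ Ideal.span {π} ^ n ↔ ((n • g : G) : WithTop G) ≤ (x : HahnSeries G k).orderTop := by
  have hpw : ((π : HahnSeries G k) ^ n).orderTop = ((n • g : G) : WithTop G) := by
    rw [← addVal_apply, AddValuation.map_pow, addVal_apply, hπ]
    simp
  have hne : (π : HahnSeries G k) ^ n ≠ 0 := by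
    intro h; rw [h, orderTop_zero] at hpw; exact WithTop.top_ne_coe hpw
  rw [Ideal.span_singleton_pow, Ideal.mem_span_singleton]
  constructor
  · rintro ⟨y, rfl⟩
    push_cast
    rw [orderTop_mul, hpw]
    exact le_add_of_nonneg_right y.2
  · intro h
    have hxe : (x : HahnSeries G k) = (π : HahnSeries G k) ^ n * ((x : HahnSeries G k) / (π : HahnSeries G k) ^ n) := by
      field_simp
    refine ⟨⟨(x : HahnSeries G k) / (π : HahnSeries G k) ^ n, ?_⟩, Subtype.ext (by push_cast; exact hxe)⟩
    rw [mem_hahnSub]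
    rw [hxe, orderTop_mul, hpw] at h
    by_contra! h2
    have h3 := WithTop.add_lt_add_left (WithTop.coe_ne_top (a := n • g)) h2
    rw [add_zero] at h3
    exact absurd h (not_le.2 h3)

theorem hahn_henselian {G k : Type} [AddCommGroup G] [LinearOrder G] [IsOrderedAddMonoid G]
    [Archimedean G] [Field k] : HenselianLocalRing (hahnSub G k) where
  is_henselian := by
    intro f hfm a₀ h₀ hu
    by_cases hz : f.eval a₀ = 0
    · exact ⟨a₀, hz, by simp⟩
    set π := f.eval a₀ with hπ
    have hπ0 : (π : HahnSeries G k) ≠ 0 := fun h => hz (Subtype.ext h)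
    obtain ⟨g, hg⟩ := WithTop.ne_top_iff_exists.1 (orderTop_ne_top.2 hπ0)
    have hgpos : 0 < g := by
      have h1 : 0 ≤ (π : HahnSeries G k).orderTop := π.2
      rw [← hg] at h1
      refine lt_of_le_of_ne (by exact_mod_cast h1) ?_
      rintro rfl
      apply (IsLocalRing.mem_maximalIdeal _).1 h₀
      have h2 : (π : HahnSeries G k)⁻¹ ∈ hahnSub G k := by
        rw [mem_hahnSub]
        have h3 : ((π : HahnSeries G k) * (π : HahnSeries G k)⁻¹).orderTop = 0 := by
          rw [mul_inv_cancel₀ hπ0]; simp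
        rw [orderTop_mul, ← hg, WithTop.coe_zero, zero_add] at h3
        exact h3.ge
      exact IsUnit.of_mul_eq_one ⟨_, h2⟩ (Subtype.ext (mul_inv_cancel₀ hπ0))
    have hmem := hahn_mem_pow π g hg.symm
    have hcomp : IsAdicComplete (Ideal.span {π}) (hahnSub G k) :=
      { haus' := by
          intro x hx
          apply Subtype.ext
          ext γ
          obtain ⟨n, hn⟩ := exists_lt_nsmul hgpos γ
          have h1 := hx n
          rw [SModEq.sub_mem, sub_zero, smul_eq_mul, Ideal.mul_top, hmem, le_orderTop_iff'] at h1
          simpa using h1 γ hn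
        prec' := by
          intro s hs
          have hs' : ∀ m n, m ≤ n → ∀ γ < m • g, (s m : HahnSeries G k).coeff γ = (s n : HahnSeries G k).coeff γ := by
            intro m n hmn γ hγ
            have h1 := hs hmn
            rw [SModEq.sub_mem, smul_eq_mul, Ideal.mul_top, hmem, le_orderTop_iff'] at h1
            have := h1 γ hγ
            push_cast at this
            rw [coeff_sub] at this
            exact sub_eq_zero.1 this
          obtain ⟨F, hF⟩ := hahn_limit g hgpos (fun n => (s n : HahnSeries G k)) hs'
          have hFm : F ∈ hahnSub G k := by
            rw [mem_hahnSub]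
            refine (le_orderTop_iff' F 0).2 fun γ hγ => ?_
            have : γ < 1 • g := by simpa using hγ.trans hgpos
            rw [hF 1 γ this]
            exact (le_orderTop_iff' _ 0).1 (s 1).2 γ hγ
          refine ⟨⟨F, hFm⟩, fun n => ?_⟩
          rw [SModEq.sub_mem, smul_eq_mul, Ideal.mul_top, hmem, le_orderTop_iff']
          intro γ hγ
          push_cast
          rw [coeff_sub, hF n γ hγ, sub_self] }
    obtain ⟨r, hr, hr2⟩ := (IsAdicComplete.henselianRing (hahnSub G k) (Ideal.span {π})).is_henselian f hfm a₀
      (Ideal.mem_span_singleton_self _) (hu.map _)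
    refine ⟨r, hr, ?_⟩
    exact (Ideal.span_singleton_le_iff_mem _).2 h₀ hr2

end

section
open Polynomial
open Polynomial

theorem as_galois {K L : Type} [Field K] [Field L] [Algebra K L] (p : ℕ) [hp : Fact p.Prime]
    [CharP K p] (pb : PowerBasis K L) (c : K)
    (hα : pb.gen ^ p - pb.gen = algebraMap K L c) : IsGalois K L := by
  have : CharP L p := charP_of_injective_algebraMap (algebraMap K L).injective p
  set P : K[X] := X ^ p - X - C c with hP
  have hP0 : P ≠ 0 := by
    intro h
    have : P.natDegree = p := by
      rw [hP]
      rw [natDegree_sub_C, FiniteField.X_pow_card_sub_X_natDegree_eq K hp.out.one_lt]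
    rw [h] at this
    simp at this
    exact hp.out.ne_zero this.symm
  have hsep : P.Separable := by
    have : derivative P = -1 := by simp [hP, derivative_X_pow]
    rw [Polynomial.Separable, this]
    exact isCoprime_one_right.neg_right
  have hspl : (P.map (algebraMap K L)).Splits := by
    let : Algebra (ZMod p) L := ZMod.algebra L p
    have h1 : ((X ^ p - X : (ZMod p)[X])).Splits := by
      rw [splits_iff_card_roots, FiniteField.X_pow_card_sub_X_natDegree_eq _ hp.out.one_lt]
      have := FiniteField.roots_X_pow_card_sub_X (ZMod p)
      rw [ZMod.card p] at this
      rw [this]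
      simp [ZMod.card p]
    have h2 := h1.map (algebraMap (ZMod p) L)
    have h3 := Splits.comp_of_natDegree_le_one h2 (g := X - C pb.gen) (by simp)
    convert h3 using 1
    simp only [hP, Polynomial.map_sub, Polynomial.map_pow, map_X, map_C, sub_comp, pow_comp, X_comp]
    rw [← hα, sub_pow_char]
    simp only [map_sub, map_pow]
    ring
  have : P.IsSplittingField K L := by
    refine ⟨hspl, ?_⟩
    rw [eq_top_iff, ← pb.adjoin_gen_eq_top]
    apply Algebra.adjoin_mono
    rw [Set.singleton_subset_iff, mem_rootSet]
    refine ⟨hP0, ?_⟩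
    simp [hP, hα]
  exact IsGalois.of_separable_splitting_field hsep

theorem core1 {K L : Type} [Field K] [Field L] [Algebra K L] (p : ℕ) [hp : Fact p.Prime]
    [CharP K p] (pb : PowerBasis K L) (hdim : pb.dim = p) (c : K)
    (hα : pb.gen ^ p - pb.gen = algebraMap K L c)
    (w : AddValuation L (WithTop ℝ)) (s : ℝ) (hs : 0 < s) (hw : w pb.gen = ((-s : ℝ) : WithTop ℝ))
    (hind : ∀ f : ℕ → K, ∀ i < p, w (∑ j ∈ Finset.range p, algebraMap K L (f j) * pb.gen ^ j) ≤
      w (algebraMap K L (f i) * pb.gen ^ i))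
    (σ : L ≃ₐ[K] L) :
    (σ ≠ 1 → w (σ pb.gen - pb.gen) = 0) ∧
    (∀ x, w x + s ≤ w (σ x - x)) ∧ (∀ x, w (σ x) = w x) := by
  have : CharP L p := charP_of_injective_algebraMap (algebraMap K L).injective p
  set α := pb.gen with hαdef
  set j := σ α - α with hj
  have hjp : j ^ p = j := by
    have h1 : σ α ^ p - σ α = algebraMap K L c := by
      rw [← map_pow, ← map_sub, hα, AlgEquiv.commutes]
    rw [hj, sub_pow_char]
    linear_combination h1 - hα
  have hj1 : j ≠ 0 → w j = 0 := by
    intro h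
    obtain ⟨r, hr⟩ := WithTop.ne_top_iff_exists.1 (w.ne_top_iff.2 h)
    have h2 := congrArg w hjp
    rw [AddValuation.map_pow, ← hr] at h2 
    rw [← WithTop.coe_nsmul, WithTop.coe_inj, nsmul_eq_mul] at h2
    have hp1 : (1 : ℝ) < p := by exact_mod_cast hp.out.one_lt
    have : r = 0 := by
      have : ((p : ℝ) - 1) * r = 0 := by linarith
      rcases mul_eq_zero.1 this with h | h
      · linarith
      · exact h
    rw [← hr, this]; rfl
  have hj0 : 0 ≤ w j := by
    by_cases h : j = 0
    · rw [h]; simp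
    · rw [hj1 h]
  have hσα : σ α = α + j := by rw [hj]; ring
  have hwσα : w (σ α) = w α := by
    rw [hσα]
    apply AddValuation.map_add_eq_of_lt_left
    rw [hw]
    refine lt_of_lt_of_le ?_ hj0
    exact_mod_cast (by linarith : -s < 0)
  have hmain : ∀ x, w x + s ≤ w (σ x - x) := by
    intro x
    obtain ⟨f, hfd, hfx⟩ := pb.exists_eq_aeval x
    rw [hdim] at hfd
    rw [aeval_eq_sum_range' hfd] at hfx
    simp only [Algebra.smul_def] at hfx
    have h1 : σ x - x = ∑ i ∈ Finset.range p, algebraMap K L (f.coeff i) * (σ α ^ i - α ^ i) := by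
      rw [hfx, map_sum, ← Finset.sum_sub_distrib]
      refine Finset.sum_congr rfl fun i _ => ?_
      rw [map_mul, map_pow, AlgEquiv.commutes]; ring
    rw [h1]
    apply AddValuation.map_le_sum
    intro i hi
    have h2 := hind f.coeff i (Finset.mem_range.1 hi)
    rw [← hfx] at h2
    refine (add_le_add_left h2 _).trans ?_
    rw [AddValuation.map_mul, AddValuation.map_mul, add_assoc]
    refine add_le_add_right ?_ _
    rw [AddValuation.map_pow, hw, ← (Commute.all (σ α) α).geom_sum₂_mul, AddValuation.map_mul, ← hj]
    refine le_trans ?_ (le_add_of_nonneg_right hj0)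
    apply AddValuation.map_le_sum
    intro l hl
    rw [AddValuation.map_mul, AddValuation.map_pow, AddValuation.map_pow, hwσα, ← add_nsmul, hw]
    have hl' := Finset.mem_range.1 hl
    have : l + (i - 1 - l) = i - 1 := by omega
    rw [this]
    obtain ⟨m, rfl⟩ : ∃ m, i = m + 1 := ⟨i - 1, by omega⟩
    rw [Nat.add_sub_cancel]
    rw [← WithTop.coe_nsmul, ← WithTop.coe_nsmul, ← WithTop.coe_add, WithTop.coe_le_coe]
    simp only [nsmul_eq_mul]
    push_cast
    linarith
  refine ⟨fun hσ => hj1 fun h => hσ ?_, hmain, fun x => ?_⟩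
  · have : σ.toAlgHom = AlgHom.id K L := pb.algHom_ext (by
      simpa [h] using hσα)
    ext x
    exact DFunLike.congr_fun this x
  · by_cases hx : x = 0
    · simp [hx]
    have h1 : σ x = x + (σ x - x) := by ring
    rw [h1]
    apply AddValuation.map_add_eq_of_lt_left
    refine lt_of_lt_of_le ?_ (hmain x)
    obtain ⟨r, hr⟩ := WithTop.ne_top_iff_exists.1 (w.ne_top_iff.2 hx)
    rw [← hr]
    exact_mod_cast (by linarith : r < r + s)

theorem core2 {K L : Type} [Field K] [Field L] [Algebra K L] [FiniteDimensional K L] [IsGalois K L]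
    (w : AddValuation L (WithTop ℝ)) (h : ∀ (σ : L ≃ₐ[K] L) x, w (σ x) = w x) (x : L) :
    w (algebraMap K L (Algebra.norm K x)) = Nat.card (L ≃ₐ[K] L) • w x := by
  classical
  rw [Algebra.norm_eq_prod_automorphisms]
  have : ∀ S : Finset (L ≃ₐ[K] L), w (∏ σ ∈ S, σ x) = S.card • w x := by
    intro S
    induction S using Finset.induction_on with
    | empty => simp
    | insert σ S hσ ih =>
      rw [Finset.prod_insert hσ, AddValuation.map_mul, ih, h, Finset.card_insert_of_notMem hσ,
        add_nsmul, one_nsmul, add_comm]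
  rw [this, Nat.card_eq_fintype_card, Finset.card_univ]

theorem core3 {K L : Type} [Field K] [Field L] [Algebra K L] (p : ℕ) [hp : Fact p.Prime]
    [CharP K p] (pb : PowerBasis K L) (hdim : pb.dim = p) (c : K)
    (hα : pb.gen ^ p - pb.gen = algebraMap K L c)
    (w : AddValuation L (WithTop ℝ)) (a : ℝ) (ha : 0 < a)
    (hw : w pb.gen = ((-(a / p) : ℝ) : WithTop ℝ))
    (hind : ∀ f : ℕ → K, ∀ i < p, w (∑ j ∈ Finset.range p, algebraMap K L (f j) * pb.gen ^ j) ≤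
      w (algebraMap K L (f i) * pb.gen ^ i))
    (A : ValuationSubring K) (v : Kˣ → ℝ) (Γ : AddSubgroup ℝ)
    (hvw : ∀ x : Kˣ, w (algebraMap K L x) = (v x : WithTop ℝ))
    (hΓ : Set.range v = (Γ : Set ℝ))
    (hA : ∀ x : Kˣ, ((x : K) ∈ A ↔ 0 ≤ v x)) :
    IsGalois K L ∧ FiniteDimensional K L ∧ IsCyclic (L ≃ₐ[K] L) ∧
        Nat.card (L ≃ₐ[K] L) = p ∧
        ∀ H : Ideal ↥A, IsAssociatedIdeal A L H →
          {r : ℝ | ∃ h ∈ H, ∃ x : Kˣ, (x : K) = ((h : ↥A) : K) ∧ v x = r} =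
            {r : ℝ | r ∈ Γ ∧ a ≤ r} := by
  have hp0 : (0 : ℝ) < p := by exact_mod_cast hp.out.pos
  have hs : 0 < a / p := by positivity
  have hgal := as_galois p pb c hα
  have hfin : FiniteDimensional K L := pb.finite
  have hcard : Nat.card (L ≃ₐ[K] L) = p := by
    rw [IsGalois.card_aut_eq_finrank, pb.finrank, hdim]
  have hcyc : IsCyclic (L ≃ₐ[K] L) := isCyclic_of_prime_card hcard
  refine ⟨hgal, hfin, hcyc, hcard, fun H hH => ?_⟩
  have hc1 := core1 p pb hdim c hα w (a / p) hs hw hind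
  have hnorm := core2 w fun σ => (hc1 σ).2.2
  rw [hcard] at hnorm
  obtain ⟨σ, hσ⟩ := hcyc.exists_generator
  have hσ1 : σ ≠ 1 := by
    rintro rfl
    have : Subsingleton (L ≃ₐ[K] L) := ⟨fun x y => by
      have hx := hσ x
      have hy := hσ y
      simp at hx hy
      rw [hx, hy]⟩
    have h1 := Nat.card_of_subsingleton (1 : L ≃ₐ[K] L)
    rw [hcard] at h1
    exact hp.out.one_lt.ne' h1
  obtain ⟨hj, hmain, hinv⟩ := hc1 σ
  have hAw : ∀ x : K, x ∈ A ↔ 0 ≤ w (algebraMap K L x) := by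
    intro x
    by_cases hx : x = 0
    · simp [hx]
    · have h1 := hA (Units.mk0 x hx)
      have h2 := hvw (Units.mk0 x hx)
      rw [Units.val_mk0] at h1 h2
      rw [h1, h2]
      exact_mod_cast Iff.rfl
  let iAL : Algebra A L := ((algebraMap K L).comp A.subtype).toAlgebra
  have iT : IsScalarTower A K L := IsScalarTower.of_algebraMap_eq fun x => rfl
  have hHe := @hH iAL iT σ hσ
  -- integral elements have nonnegative value
  have hint : ∀ b : L, IsIntegral A b → 0 ≤ w b := by
    rintro b ⟨f, hfm, hf⟩
    by_contra! hb
    have hb0 : b ≠ 0 := by rintro rfl; simp at hb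
    obtain ⟨r, hr⟩ := WithTop.ne_top_iff_exists.1 (w.ne_top_iff.2 hb0)
    rw [← hr] at hb
    have hr0 : r < 0 := by exact_mod_cast hb
    rw [eval₂_eq_sum_range, Finset.sum_range_succ, hfm.coeff_natDegree, map_one, one_mul] at hf
    have h1 : b ^ f.natDegree = - ∑ i ∈ Finset.range f.natDegree, algebraMap A L (f.coeff i) * b ^ i := by
      linear_combination hf
    have h2 : w (b ^ f.natDegree) < w (- ∑ i ∈ Finset.range f.natDegree, algebraMap A L (f.coeff i) * b ^ i) := by
      rw [AddValuation.map_neg]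
      apply AddValuation.map_lt_sum
      · rw [w.ne_top_iff]; exact pow_ne_zero _ hb0
      · intro i hi
        have hi' := Finset.mem_range.1 hi
        rw [AddValuation.map_mul, AddValuation.map_pow, AddValuation.map_pow, ← hr]
        refine lt_of_lt_of_le ?_ (le_add_of_nonneg_left ((hAw _).1 (f.coeff i).2))
        rw [← WithTop.coe_nsmul, ← WithTop.coe_nsmul, WithTop.coe_lt_coe, nsmul_eq_mul, nsmul_eq_mul]
        have : (i : ℝ) < f.natDegree := by exact_mod_cast hi'
        nlinarith
    rw [← h1] at h2
    exact lt_irrefl _ h2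
  have hJ : ∀ b ∈ Ideal.span {b : ↥(integralClosure ↥A L) |
          ∃ x : Lˣ, (b : L) = σ (x : L) * (x : L)⁻¹ - 1}, ((a / p : ℝ) : WithTop ℝ) ≤ w (b : L) := by
    intro b hb
    induction hb using Submodule.span_induction with
    | mem b hb =>
      obtain ⟨x, hx⟩ := hb
      have h1 : (b : L) * x = σ x - x := by
        rw [hx]; field_simp
      have h2 := hmain x
      rw [← h1, AddValuation.map_mul, add_comm] at h2
      have hx0 : w (x : L) ≠ ⊤ := w.ne_top_iff.2 x.ne_zero
      exact (WithTop.add_le_add_iff_right hx0).1 h2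
    | zero => simp
    | add x y _ _ hx hy => 
      push_cast
      exact AddValuation.map_le_add _ hx hy
    | smul y x _ hx =>
      rw [smul_eq_mul]
      push_cast
      rw [AddValuation.map_mul]
      exact le_add_of_nonneg_of_le (hint _ y.2) hx
  have hHle : ∀ h ∈ H, ((a : ℝ) : WithTop ℝ) ≤ w (algebraMap K L h) := by
    intro h hh
    rw [hHe] at hh
    induction hh using Submodule.span_induction with
    | mem h hh =>
      obtain ⟨b, hb, hb2⟩ := hh
      have h1 := hJ b hb
      have h2 : algebraMap K L (h : K) = algebraMap K L (Algebra.norm K (b : L)) := congrArg _ hb2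
      rw [h2, hnorm]
      refine le_trans (le_of_eq ?_) (nsmul_le_nsmul_right h1 p)
      rw [← WithTop.coe_nsmul, nsmul_eq_mul]
      congr 1
      field_simp
    | zero => simp
    | add x y _ _ hx hy => 
      rw [show ((x + y : A) : K) = (x : K) + (y : K) from rfl, RingHom.map_add]
      exact AddValuation.map_le_add _ hx hy
    | smul y x _ hx =>
      rw [smul_eq_mul]
      rw [show ((y * x : A) : K) = (y : K) * (x : K) from rfl, RingHom.map_mul, AddValuation.map_mul]
      exact le_add_of_nonneg_of_le ((hAw _).1 y.2) hx
  -- the distinguished element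
  have hα0 : pb.gen ≠ 0 := by
    intro h; rw [h, AddValuation.map_zero] at hw; exact WithTop.top_ne_coe hw
  have hwc : w (algebraMap K L c) = ((-a : ℝ) : WithTop ℝ) := by
    rw [← hα, sub_eq_add_neg]
    have h1 : w (pb.gen ^ p) = ((-a : ℝ) : WithTop ℝ) := by
      rw [AddValuation.map_pow, hw, ← WithTop.coe_nsmul, nsmul_eq_mul]
      congr 1
      field_simp
    rw [AddValuation.map_add_eq_of_lt_left, h1]
    rw [h1, AddValuation.map_neg, hw, WithTop.coe_lt_coe, neg_lt_neg_iff]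
    exact div_lt_self ha (by exact_mod_cast hp.out.one_lt)
  have hc0 : c ≠ 0 := by
    rintro rfl; rw [map_zero (algebraMap K L), AddValuation.map_zero] at hwc; exact WithTop.top_ne_coe hwc
  have hwci : w (algebraMap K L c⁻¹) = ((a : ℝ) : WithTop ℝ) := by
    have h1 := hvw (Units.mk0 c hc0)
    rw [Units.val_mk0, hwc] at h1
    have h2 := hvw (Units.mk0 c hc0)⁻¹
    rw [Units.val_inv_eq_inv_val, Units.val_mk0] at h2
    have h3 : w (algebraMap K L c * algebraMap K L c⁻¹) = 0 := by
      rw [← map_mul, mul_inv_cancel₀ hc0]; simp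
    rw [AddValuation.map_mul, hwc, h2, ← WithTop.coe_add] at h3
    rw [h2]
    have h4 : -a + v (Units.mk0 c hc0)⁻¹ = 0 := by exact_mod_cast h3
    congr 1
    linarith
  have hcA : c⁻¹ ∈ A := by
    rw [hAw, hwci]; exact_mod_cast ha.le
  set j := σ pb.gen - pb.gen with hjd
  have hwj : w j = 0 := hj hσ1
  have hjp : j ^ p = j := by
    have : CharP L p := charP_of_injective_algebraMap (algebraMap K L).injective p
    have h1 : σ pb.gen ^ p - σ pb.gen = algebraMap K L c := by
      rw [← map_pow, ← map_sub, hα, AlgEquiv.commutes]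
    rw [hjd, sub_pow_char]
    linear_combination h1 - hα
  have hintj : IsIntegral A j := by
    refine ⟨X ^ p - X, ?_, ?_⟩
    · apply Polynomial.monic_X_pow_sub
      rw [degree_X]
      exact_mod_cast hp.out.one_lt
    · simp [hjp]
  have hintα : IsIntegral A (pb.gen)⁻¹ := by
    refine ⟨X ^ p + (C ⟨c⁻¹, hcA⟩ * X ^ (p - 1) - C ⟨c⁻¹, hcA⟩), ?_, ?_⟩
    · apply Polynomial.monic_X_pow_add
      refine (degree_sub_le _ _).trans_lt (max_lt ?_ ?_)
      · refine (degree_C_mul_X_pow_le _ _).trans_lt ?_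
        exact_mod_cast Nat.sub_lt hp.out.pos one_pos
      · refine degree_C_le.trans_lt ?_
        exact_mod_cast hp.out.pos
    · have hval : algebraMap A L ⟨c⁻¹, hcA⟩ = (algebraMap K L c)⁻¹ := by
        rw [← map_inv₀]; rfl
      simp only [eval₂_add, eval₂_sub, eval₂_mul, eval₂_pow, eval₂_X, eval₂_C, hval]
      have hc0' : algebraMap K L c ≠ 0 := by simpa using hc0
      obtain ⟨q, hq⟩ : ∃ q, p = q + 1 := ⟨p - 1, by have := hp.out.pos; omega⟩
      have hα' := hα
      rw [hq] at hα' ⊢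
      rw [Nat.add_sub_cancel]
      simp only [inv_pow]
      field_simp
      linear_combination (-(pb.gen ^ q) : L) * hα'
  have hb : j * (pb.gen)⁻¹ = σ pb.gen * (pb.gen)⁻¹ - 1 := by
    rw [hjd]; field_simp
  have hwb : w (j * (pb.gen)⁻¹) = ((a / p : ℝ) : WithTop ℝ) := by
    have h3 : w (pb.gen⁻¹ * pb.gen) = 0 := by rw [inv_mul_cancel₀ hα0]; simp
    rw [AddValuation.map_mul, hwj, zero_add]
    obtain ⟨r, hr⟩ := WithTop.ne_top_iff_exists.1 (w.ne_top_iff.2 (inv_ne_zero hα0))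
    rw [AddValuation.map_mul, ← hr, hw, ← WithTop.coe_add] at h3
    have h4 : r + -(a / p) = 0 := by exact_mod_cast h3
    rw [← hr]
    congr 1
    linarith
  have hwn : w (algebraMap K L (Algebra.norm K (j * (pb.gen)⁻¹))) = ((a : ℝ) : WithTop ℝ) := by
    rw [hnorm, hwb, ← WithTop.coe_nsmul, nsmul_eq_mul]
    congr 1
    field_simp
  set n := Algebra.norm K (j * (pb.gen)⁻¹) with hn
  have hnA : n ∈ A := by
    rw [hAw, hwn]; exact_mod_cast ha.le
  have hn0 : n ≠ 0 := by
    intro h; rw [h] at hwn; simp at hwn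
  have hnH : (⟨n, hnA⟩ : A) ∈ H := by
    rw [hHe]
    apply Ideal.subset_span
    refine ⟨⟨j * (pb.gen)⁻¹, hintj.mul hintα⟩, Ideal.subset_span ⟨Units.mk0 _ hα0, hb⟩, rfl⟩
  ext r
  constructor
  · rintro ⟨h, hh, x, hx, rfl⟩
    refine ⟨?_, ?_⟩
    · have : v x ∈ Set.range v := ⟨x, rfl⟩
      rw [hΓ] at this
      exact this
    · have h1 := hHle h hh
      rw [← hx, hvw] at h1
      exact_mod_cast h1
  · rintro ⟨hr, har⟩
    have hr' : r ∈ Set.range v := by rw [hΓ]; exact hr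
    obtain ⟨x, rfl⟩ := hr'
    have hxn : (x : K) = n * (x / n) := by field_simp
    have hA2 : (x : K) / n ∈ A := by
      rw [hAw]
      have h1 := hvw x
      rw [hxn, map_mul, AddValuation.map_mul, hwn] at h1
      by_contra! h
      obtain ⟨r, hr⟩ := WithTop.ne_top_iff_exists.1 (ne_top_of_lt h)
      rw [← hr, ← WithTop.coe_add, WithTop.coe_inj] at h1
      rw [← hr] at h
      have : r < 0 := by exact_mod_cast h
      linarith
    refine ⟨⟨n, hnA⟩ * ⟨_, hA2⟩, Ideal.mul_mem_right _ _ hnH, x, hxn, rfl⟩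

end

section
open Polynomial

theorem indep_roots {k F : Type} [Field k] [Field F] [Algebra k F] (p : ℕ) (hp : p.Prime)
    (u : k) (hu : ∀ b : k, b ^ p ≠ u) (θ : F) (hθ : θ ^ p = algebraMap k F u) (y : ℕ → k)
    (hy : ∑ j ∈ Finset.range p, algebraMap k F (y j) * θ ^ j = 0) : ∀ i < p, y i = 0 := by
  have hirr := X_pow_sub_C_irreducible_of_prime hp hu
  have hmin : minpoly k θ = X ^ p - C u :=
    (minpoly.eq_of_irreducible_of_monic hirr (by simp [hθ]) (monic_X_pow_sub_C u hp.ne_zero)).symm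
  let f : k[X] := ∑ j ∈ Finset.range p, C (y j) * X ^ j
  have hf0 : f = 0 := by
    by_contra h
    have h1 : aeval θ f = 0 := by
      simp only [f, map_sum, map_mul, aeval_C, map_pow, aeval_X]
      exact hy
    have h2 := minpoly.degree_le_of_ne_zero k θ h h1
    rw [hmin, degree_X_pow_sub_C hp.pos] at h2
    have h3 : f.degree < p := by
      refine (degree_sum_le _ _).trans_lt ?_
      refine (Finset.sup_lt_iff (WithBot.bot_lt_coe p)).2 ?_
      intro j hj
      refine (degree_C_mul_X_pow_le _ _).trans_lt ?_
      exact WithBot.coe_lt_coe.2 (Finset.mem_range.1 hj)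
    exact absurd h2 (not_le.2 h3)
  intro i hi
  have h1 : f.coeff i = 0 := by rw [hf0]; simp
  simpa [f, finsetSum_coeff, coeff_C_mul, coeff_X_pow, hi] using h1


end

section
open HahnSeries

open HahnSeries

noncomputable def hmap {k F : Type} [Field k] [Field F] (φ : k →+* F) :
    HahnSeries ℝ k →+* HahnSeries ℝ F where
  toFun x := x.map φ
  map_one' := by
    ext g
    rw [HahnSeries.map_coeff, coeff_one, coeff_one]
    split_ifs <;> simp
  map_zero' := by ext; simp
  map_add' x y := by ext; simp
  map_mul' x y := by
    ext g
    rw [HahnSeries.map_coeff, coeff_mul, coeff_mul, map_sum]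
    symm
    simp only [HahnSeries.map_coeff, map_mul]
    apply Finset.sum_subset
    · intro ij h
      rw [Finset.mem_antidiagonal] at h ⊢
      refine ⟨?_, ?_, h.2.2⟩
      · have := h.1
        rw [mem_support, HahnSeries.map_coeff] at this
        rw [mem_support]
        intro h0; apply this; rw [h0, map_zero]
      · have := h.2.1
        rw [mem_support, HahnSeries.map_coeff] at this
        rw [mem_support]
        intro h0; apply this; rw [h0, map_zero]
    · intro ij h h2
      rw [Finset.mem_antidiagonal] at h h2
      by_contra h3
      refine h2 ⟨?_, ?_, h.2.2⟩
      · rw [mem_support, HahnSeries.map_coeff]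
        intro h0; apply h3; rw [h0, zero_mul]
      · rw [mem_support, HahnSeries.map_coeff]
        intro h0; apply h3; rw [h0, mul_zero]

noncomputable def hemb (Γ : AddSubgroup ℝ) {k F : Type} [Field k] [Field F] (φ : k →+* F) :
    HahnSeries Γ k →+* HahnSeries ℝ F :=
  (hmap φ).comp (embDomainRingHom Γ.subtype Subtype.val_injective (fun _ _ => Iff.rfl))

theorem hemb_coeff (Γ : AddSubgroup ℝ) {k F : Type} [Field k] [Field F] (φ : k →+* F)
    (x : HahnSeries Γ k) (g : Γ) : (hemb Γ φ x).coeff (g : ℝ) = φ (x.coeff g) := by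
  have := embDomain_mk_coeff (f := Γ.subtype) Subtype.val_injective (fun _ _ => Iff.rfl) (x := x) (a := g)
  exact congrArg φ this

theorem hemb_coeff_not (Γ : AddSubgroup ℝ) {k F : Type} [Field k] [Field F] (φ : k →+* F)
    (x : HahnSeries Γ k) (r : ℝ) (hr : r ∉ Γ) : (hemb Γ φ x).coeff r = 0 := by
  have := embDomain_of_notMem_range (f := ⟨⟨Γ.subtype, Subtype.val_injective⟩, Iff.rfl⟩) (x := x) (b := r)
    (by rintro ⟨y, rfl⟩; exact hr y.2)
  exact (congrArg φ this).trans (map_zero φ)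

theorem hemb_coeff_mem (Γ : AddSubgroup ℝ) {k F : Type} [Field k] [Field F] (φ : k →+* F)
    (x : HahnSeries Γ k) (r : ℝ) : ∃ y, (hemb Γ φ x).coeff r = φ y := by
  by_cases hr : r ∈ Γ
  · exact ⟨_, hemb_coeff Γ φ x ⟨r, hr⟩⟩
  · exact ⟨0, by rw [hemb_coeff_not Γ φ x r hr, map_zero]⟩

theorem hemb_single (Γ : AddSubgroup ℝ) {k F : Type} [Field k] [Field F] (φ : k →+* F)
    (g : Γ) (u : k) : hemb Γ φ (single g u) = single (g : ℝ) (φ u) := by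
  ext r
  by_cases hr : r ∈ Γ
  · rw [hemb_coeff Γ φ _ ⟨r, hr⟩, coeff_single, coeff_single, apply_ite φ, map_zero]
    congr 1
    rw [Subtype.ext_iff]
  · rw [hemb_coeff_not Γ φ _ r hr, coeff_single_of_ne]
    rintro rfl
    exact hr g.2

theorem hemb_orderTop (Γ : AddSubgroup ℝ) {k F : Type} [Field k] [Field F] (φ : k →+* F)
    (x : HahnSeries Γ k) (hx : x ≠ 0) :
    (hemb Γ φ x).orderTop = (((x.order : Γ) : ℝ) : WithTop ℝ) := by
  apply le_antisymm
  · apply orderTop_le_of_coeff_ne_zero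
    rw [hemb_coeff]
    simpa using coeff_order_eq_zero.not.2 hx
  · rw [le_orderTop_iff']
    intro r hr
    by_cases hrΓ : r ∈ Γ
    · rw [hemb_coeff Γ φ _ ⟨r, hrΓ⟩, coeff_eq_zero_of_lt_order, map_zero]
      exact hr
    · exact hemb_coeff_not Γ φ x r hrΓ

theorem coeff_mul_low {F : Type} [Field F] (x y : HahnSeries ℝ F) (r s : ℝ)
    (hx : (r : WithTop ℝ) ≤ x.orderTop) (hy : (s : WithTop ℝ) ≤ y.orderTop) :
    (x * y).coeff (r + s) = x.coeff r * y.coeff s := by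
  rw [le_orderTop_iff'] at hx hy
  rw [coeff_mul]
  apply Finset.sum_eq_single (r, s)
  · rintro ⟨i, j⟩ h hne
    rw [Finset.mem_antidiagonal] at h
    obtain ⟨h1, h2, h3⟩ := h
    simp only at h1 h2 h3
    have h4 : r ≤ i := by
      by_contra! h; exact h1 (hx i h)
    have h5 : s ≤ j := by
      by_contra! h; exact h2 (hy j h)
    exfalso
    apply hne
    ext <;> simp <;> linarith
  · intro h
    rw [Finset.mem_antidiagonal] at h
    by_contra h3
    refine h ⟨?_, ?_, rfl⟩
    · rw [mem_support]; intro h0; apply h3; simp only; rw [h0, zero_mul]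
    · rw [mem_support]; intro h0; apply h3; simp only; rw [h0, mul_zero]

theorem supp_pow {F : Type} [Field F] (S : ℕ → Set ℝ)
    (hS : ∀ n, ∀ x ∈ S n, ∀ y ∈ S 1, x + y ∈ S (n + 1)) (f : HahnSeries ℝ F)
    (hf : f.support ⊆ S 1) (n : ℕ) : (f ^ (n + 1)).support ⊆ S (n + 1) := by
  induction n with
  | zero => simpa using hf
  | succ n ih =>
    rw [pow_succ]
    refine support_mul_subset.trans ?_
    rintro _ ⟨x, hx, y, hy, rfl⟩
    exact hS _ _ (ih hx) _ (hf hy)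

theorem frob_coeff {F : Type} [Field F] (p : ℕ) [hp : Fact p.Prime] [CharP F p]
    (f : HahnSeries ℝ F) (g : ℝ) : (f ^ p).coeff (p * g) = f.coeff g ^ p := by
  have : CharP (HahnSeries ℝ F) p :=
    charP_of_injective_ringHom (f := (HahnSeries.C : F →+* HahnSeries ℝ F)) HahnSeries.C_injective p
  let f1 : HahnSeries ℝ F := ⟨fun x => if x < g then f.coeff x else 0, f.isPWO_support.mono (by
    intro x hx; simp at hx; simpa using hx.2)⟩
  let f2 : HahnSeries ℝ F := ⟨fun x => if g < x then f.coeff x else 0, f.isPWO_support.mono (by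
    intro x hx; simp at hx; simpa using hx.2)⟩
  have hsum : f = f1 + single g (f.coeff g) + f2 := by
    ext x
    rw [coeff_add, coeff_add, coeff_single]
    simp only [f1, f2]
    rcases lt_trichotomy x g with h | h | h
    · simp [h, h.ne, h.not_gt]
    · simp [h]
    · simp [h, h.ne', h.not_gt]
  obtain ⟨q, hq⟩ : ∃ q, p = q + 1 := ⟨p - 1, by have := hp.out.pos; omega⟩
  have h1 : (f1 ^ p).coeff (p * g) = 0 := by
    have := supp_pow (fun n => {x : ℝ | x < n * g}) (by
      intro n x hx y hy
      simp only [Set.mem_ofPred_eq] at *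
      push_cast at *
      linarith) f1 (by
      intro x hx
      simp [f1] at hx
      simpa using hx.1) q
    rw [← hq] at this
    by_contra h
    have h2 := this (show (p * g : ℝ) ∈ (f1 ^ p).support from h)
    simp at h2
  have h2 : (f2 ^ p).coeff (p * g) = 0 := by
    have := supp_pow (fun n => {x : ℝ | n * g < x}) (by
      intro n x hx y hy
      simp only [Set.mem_ofPred_eq] at *
      push_cast at *
      linarith) f2 (by
      intro x hx
      simp [f2] at hx
      simpa using hx.1) q
    rw [← hq] at this
    by_contra h
    have h2 := this (show (p * g : ℝ) ∈ (f2 ^ p).support from h)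
    simp at h2
  conv_lhs => rw [hsum, add_pow_char, add_pow_char, coeff_add, coeff_add, h1, h2, single_pow]
  rw [nsmul_eq_mul]
  simp

theorem exists_as_root {F : Type} [Field F] [IsAlgClosed F] (p : ℕ) [hp : Fact p.Prime] [CharP F p]
    (u : F) (hu : u ≠ 0) (a : ℝ) (ha : 0 < a) :
    ∃ α : HahnSeries ℝ F, α ^ p - α = single (-a) u ∧
      α.orderTop = ((-(a / p) : ℝ) : WithTop ℝ) ∧ α.coeff (-(a / p)) ^ p = u := by
  have hp1 : (1 : ℝ) < p := by exact_mod_cast hp.out.one_lt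
  have hp0 : (0 : ℝ) < p := by linarith
  have hroot : ∀ x : F, ∃ z, z ^ p = x := fun x => IsAlgClosed.exists_pow_nat_eq x hp.out.pos
  choose rt hrt using hroot
  let ρ : ℕ → F := fun n => rt^[n] u
  have hρ : ∀ n, ρ (n + 1) ^ p = ρ n := by
    intro n
    simp only [ρ, Function.iterate_succ_apply']
    exact hrt _
  have hρ0 : ρ 0 = u := rfl
  have hρne : ρ 1 ≠ 0 := by
    intro h
    have := hρ 0
    rw [zero_add, h, hρ0, zero_pow hp.out.ne_zero] at this
    exact hu this.symm
  let e : ℕ → ℝ := fun n => -(a / p ^ n)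
  have heS : ∀ n, e n = p * e (n + 1) := by
    intro n
    simp only [e]
    rw [pow_succ]
    field_simp
  have hmono : StrictMono e := by
    apply strictMono_nat_of_lt_succ
    intro n
    simp only [e]
    rw [neg_lt_neg_iff]
    apply div_lt_div_of_pos_left ha (by positivity)
    exact pow_lt_pow_right₀ hp1 (Nat.lt_succ_self n)
  have hmono1 : StrictMono (fun n => e (n + 1)) := fun m n h => hmono (by omega)
  have hpwo : (Function.support (Function.extend (fun n => e (n + 1)) (fun n => ρ (n + 1)) 0)).IsPWO := by
    have h1 : (Set.univ : Set ℕ).IsPWO := Set.IsWF.isPWO (Set.IsWF.of_wellFoundedLT _)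
    refine (h1.image_of_monotone hmono1.monotone).mono ?_
    intro x hx
    by_contra h
    apply hx
    rw [Function.extend_apply']
    · rfl
    · rintro ⟨n, hn⟩
      exact h ⟨n, trivial, hn⟩
  let α : HahnSeries ℝ F := ⟨_, hpwo⟩
  have hα1 : ∀ n, α.coeff (e (n + 1)) = ρ (n + 1) := fun n =>
    hmono1.injective.extend_apply (fun n => ρ (n + 1)) 0 n
  have hα2 : ∀ x, (∀ n, e (n + 1) ≠ x) → α.coeff x = 0 := by
    intro x hx
    exact Function.extend_apply' (fun n => ρ (n + 1)) (0 : ℝ → F) x (by rintro ⟨n, hn⟩; exact hx n hn)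
  have he0 : e 0 = -a := by simp [e]
  have he1 : e 1 = -(a / p) := by simp [e]
  refine ⟨α, ?_, ?_, ?_⟩
  · ext x
    obtain ⟨y, rfl⟩ : ∃ y, x = p * y := ⟨x / p, by field_simp⟩
    rw [coeff_sub, frob_coeff]
    by_cases hy : ∃ n, e (n + 1) = y
    · obtain ⟨n, rfl⟩ := hy
      rw [hα1, hρ, ← heS]
      cases n with
      | zero =>
        rw [he0, coeff_single_same, hα2, hρ0, sub_zero]
        intro n h
        rw [← he0] at h
        exact absurd (hmono.injective h) (by omega)
      | succ n =>
        rw [hα1, sub_self, coeff_single_of_ne]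
        rw [← he0]
        intro h
        exact absurd (hmono.injective h) (by omega)
    · push Not at hy
      rw [hα2 y hy, zero_pow hp.out.ne_zero, hα2, coeff_single_of_ne, sub_self]
      · rw [← he0, heS]
        intro h
        exact hy 0 (mul_left_cancel₀ hp0.ne' h).symm
      · intro n h
        rw [heS] at h
        exact hy (n + 1) (mul_left_cancel₀ hp0.ne' h)
  · rw [← he1]
    apply le_antisymm
    · apply orderTop_le_of_coeff_ne_zero
      rw [hα1 0]; exact hρne
    · rw [le_orderTop_iff']
      intro γ hγ
      apply hα2
      rintro n rfl
      have := hmono.lt_iff_lt.1 hγ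
      omega
  · rw [← he1, hα1 0, hρ 0, hρ0]
theorem hahn_ind (Γ : AddSubgroup ℝ) {k F : Type} [Field k] [Field F] [Algebra k F]
    (p : ℕ) (hp : p.Prime) (u : k) (hu : ∀ b : k, b ^ p ≠ u) (s : ℝ) (α : HahnSeries ℝ F)
    (hα : α.orderTop = ((-s : ℝ) : WithTop ℝ)) (hαu : α.coeff (-s) ^ p = algebraMap k F u)
    (f : ℕ → HahnSeries Γ k) : ∀ i < p,
    (∑ j ∈ Finset.range p, hemb Γ (algebraMap k F) (f j) * α ^ j).orderTop ≤
      (hemb Γ (algebraMap k F) (f i) * α ^ i).orderTop := by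
  intro i hi
  by_contra! hlt
  set φ := hemb Γ (algebraMap k F) with hφ
  obtain ⟨i0, hi0, hmin⟩ := Finset.exists_min_image (Finset.range p)
    (fun j => (φ (f j) * α ^ j).orderTop) ⟨i, Finset.mem_range.2 hi⟩
  have hlt2 := lt_of_le_of_lt (hmin i (Finset.mem_range.2 hi)) hlt
  obtain ⟨r, hr⟩ := WithTop.ne_top_iff_exists.1 (ne_top_of_lt hlt2)
  have hpow : ∀ j : ℕ, (α ^ j).orderTop = ((-(j * s) : ℝ) : WithTop ℝ) := by
    intro j
    rw [← addVal_apply, AddValuation.map_pow, addVal_apply, hα, ← WithTop.coe_nsmul, nsmul_eq_mul]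
    congr 1; ring
  have hpc : ∀ j : ℕ, (α ^ j).coeff (-(j * s)) = α.coeff (-s) ^ j := by
    intro j
    induction j with
    | zero => simp
    | succ j ih =>
      have := coeff_mul_low (α ^ j) α (-(j * s)) (-s) (hpow j).ge hα.ge
      rw [ih] at this
      rw [pow_succ, pow_succ, ← this]
      congr 1; push_cast; ring
  have hterm : ∀ j ∈ Finset.range p, (φ (f j) * α ^ j).coeff r =
      (φ (f j)).coeff (r + j * s) * α.coeff (-s) ^ j := by
    intro j hj
    have h1 := hmin j hj
    rw [← hr] at h1
    have h2 : ((r + j * s : ℝ) : WithTop ℝ) ≤ (φ (f j)).orderTop := by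
      rw [orderTop_mul, hpow] at h1
      by_contra! h
      obtain ⟨t, ht⟩ := WithTop.ne_top_iff_exists.1 (ne_top_of_lt h)
      rw [← ht, ← WithTop.coe_add, WithTop.coe_le_coe] at h1
      rw [← ht, WithTop.coe_lt_coe] at h
      linarith
    have h3 := coeff_mul_low (φ (f j)) (α ^ j) (r + j * s) (-(j * s)) h2 (hpow j).ge
    rw [hpc, add_neg_cancel_right] at h3
    exact h3
  have hmem : ∀ j, ∃ y, (φ (f j)).coeff (r + j * s) = algebraMap k F y := fun j =>
    hemb_coeff_mem Γ _ (f j) _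
  choose y hy using hmem
  have hzero : ∑ j ∈ Finset.range p, algebraMap k F (y j) * α.coeff (-s) ^ j = 0 := by
    rw [← hr] at hlt2
    have h1 := coeff_eq_zero_of_lt_orderTop hlt2
    rw [coeff_sum] at h1
    rw [← h1]
    refine Finset.sum_congr rfl fun j hj => ?_
    rw [hterm j hj, hy]
  have h2 := indep_roots p hp u hu _ hαu y hzero i0 (Finset.mem_range.1 hi0)
  have h3 := hterm i0 hi0
  rw [hy, h2, map_zero, zero_mul] at h3
  exact coeff_orderTop_ne hr.symm h3


end

section
open Polynomial HahnSeries
theorem hahn_main (p : ℕ) [hp : Fact p.Prime] (Γ : AddSubgroup ℝ) (a : ℝ) (haΓ : a ∈ Γ)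
    (hapos : 0 < a) {k F : Type} [Field k] [Field F] [Algebra k F] [IsAlgClosed F] [CharP k p]
    (u : k) (hu : ∀ b : k, b ^ p ≠ u) :
    ∃ (K : Type) (_ : Field K) (_ : CharP K p) (A : ValuationSubring K)
      (_ : HenselianLocalRing ↥A) (v : Kˣ → ℝ),
      (∀ x y : Kˣ, v (x * y) = v x + v y) ∧
      (∀ x y z : Kˣ, (x : K) + (y : K) = (z : K) → min (v x) (v y) ≤ v z) ∧
      Set.range v = (Γ : Set ℝ) ∧
      (∀ x : Kˣ, ((x : K) ∈ A ↔ 0 ≤ v x)) ∧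
      ∃ (L : Type) (_ : Field L) (_ : Algebra K L),
        IsGalois K L ∧ FiniteDimensional K L ∧ IsCyclic (L ≃ₐ[K] L) ∧
        Nat.card (L ≃ₐ[K] L) = p ∧
        ∀ H : Ideal ↥A, IsAssociatedIdeal A L H →
          {r : ℝ | ∃ h ∈ H, ∃ x : Kˣ, (x : K) = ((h : ↥A) : K) ∧ v x = r} =
            {r : ℝ | r ∈ Γ ∧ a ≤ r} := by
  have : CharP F p := charP_of_injective_algebraMap (algebraMap k F).injective p
  have hcK : CharP (HahnSeries Γ k) p :=
    charP_of_injective_ringHom (f := (HahnSeries.C : k →+* HahnSeries Γ k)) HahnSeries.C_injective p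
  have hu0 : u ≠ 0 := by
    rintro rfl
    exact hu 0 (zero_pow hp.out.ne_zero)
  obtain ⟨α, hα1, hα2, hα3⟩ := exists_as_root p (algebraMap k F u) (by simpa using hu0) a hapos
  let iA : Algebra (HahnSeries Γ k) (HahnSeries ℝ F) := (hemb Γ (algebraMap k F)).toAlgebra
  have hmap : ∀ x, algebraMap (HahnSeries Γ k) (HahnSeries ℝ F) x = hemb Γ (algebraMap k F) x :=
    fun x => rfl
  let v : (HahnSeries Γ k)ˣ → ℝ := fun x => ((x : HahnSeries Γ k).order : Γ)
  have hv : ∀ x : (HahnSeries Γ k)ˣ, (hemb Γ (algebraMap k F) (x : HahnSeries Γ k)).orderTop = (v x : WithTop ℝ) :=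
    fun x => hemb_orderTop Γ _ _ x.ne_zero
  have hvΓ : Set.range v = (Γ : Set ℝ) := by
    ext r
    constructor
    · rintro ⟨x, rfl⟩
      exact ((x : HahnSeries Γ k).order).2
    · intro hr
      have h1 : (single (⟨r, hr⟩ : Γ) (1 : k)) ≠ 0 := by simp
      refine ⟨Units.mk0 _ h1, ?_⟩
      simp only [v, Units.val_mk0]
      rw [order_single one_ne_zero]
  have hA : ∀ x : (HahnSeries Γ k)ˣ, ((x : HahnSeries Γ k) ∈ hahnSub Γ k ↔ 0 ≤ v x) := by
    intro x
    rw [mem_hahnSub, ← order_eq_orderTop_of_ne_zero x.ne_zero]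
    simp only [v]
    norm_cast
  have hint : IsIntegral (HahnSeries Γ k) α := by
    refine ⟨X ^ p - X - Polynomial.C (single (⟨-a, Γ.neg_mem haΓ⟩ : Γ) u), ?_, ?_⟩
    · rw [sub_sub]
      apply monic_X_pow_sub
      rw [degree_X_add_C]
      exact_mod_cast hp.out.one_lt
    · rw [eval₂_sub, eval₂_sub, eval₂_pow, eval₂_X, eval₂_C, hα1, hmap, hemb_single, sub_self]
  have hind := hahn_ind Γ p hp.out u hu (a / p) α hα2 hα3
  have hα0 : α ≠ 0 := by
    rintro rfl
    rw [orderTop_zero] at hα2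
    exact WithTop.top_ne_coe hα2
  have hdeg : (minpoly (HahnSeries Γ k) α).natDegree = p := by
    apply le_antisymm
    · have hne : (X ^ p - X - Polynomial.C (single (⟨-a, Γ.neg_mem haΓ⟩ : Γ) u) : (HahnSeries Γ k)[X]).natDegree = p := by
        rw [natDegree_sub_C, FiniteField.X_pow_card_sub_X_natDegree_eq _ hp.out.one_lt]
      have h0 : (X ^ p - X - Polynomial.C (single (⟨-a, Γ.neg_mem haΓ⟩ : Γ) u) : (HahnSeries Γ k)[X]) ≠ 0 := by
        intro h
        rw [h, natDegree_zero] at hne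
        exact hp.out.ne_zero hne.symm
      conv_rhs => rw [← hne]
      apply natDegree_le_of_dvd _ h0
      apply minpoly.dvd
      rw [map_sub, map_sub, map_pow, aeval_X, aeval_C, hα1, hmap, hemb_single, sub_self]
    · by_contra! h
      have h1 := hind (minpoly (HahnSeries Γ k) α).coeff _ h
      have h2 := minpoly.aeval (HahnSeries Γ k) α
      rw [aeval_eq_sum_range' h] at h2
      simp only [Algebra.smul_def, hmap] at h2
      rw [h2, (minpoly.monic hint).coeff_natDegree, map_one, one_mul, orderTop_zero, top_le_iff,
        orderTop_eq_top] at h1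
      exact pow_ne_zero _ hα0 h1
  refine ⟨HahnSeries Γ k, inferInstance, hcK, hahnSub Γ k, hahn_henselian, v, ?_, ?_, hvΓ, hA,
    IntermediateField.adjoin (HahnSeries Γ k) {α}, inferInstance, inferInstance, ?_⟩
  · intro x y
    simp only [v, Units.val_mul]
    rw [order_mul x.ne_zero y.ne_zero]
    rfl
  · intro x y z h
    have h1 := min_orderTop_le_orderTop_add (x := (x : HahnSeries Γ k)) (y := (y : HahnSeries Γ k))
    rw [h, ← order_eq_orderTop_of_ne_zero x.ne_zero, ← order_eq_orderTop_of_ne_zero y.ne_zero,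
      ← order_eq_orderTop_of_ne_zero z.ne_zero] at h1
    simp only [v]
    rw [min_le_iff] at h1 ⊢
    norm_cast at h1
  · let pb := IntermediateField.adjoin.powerBasis hint
    have hgen : (algebraMap (IntermediateField.adjoin (HahnSeries Γ k) {α}) (HahnSeries ℝ F)) pb.gen = α := by
      simp [pb]
    let w : AddValuation (IntermediateField.adjoin (HahnSeries Γ k) {α}) (WithTop ℝ) :=
      (addVal ℝ F).comap (algebraMap (IntermediateField.adjoin (HahnSeries Γ k) {α}) (HahnSeries ℝ F))
    have hw : ∀ x, w x = (algebraMap (IntermediateField.adjoin (HahnSeries Γ k) {α}) (HahnSeries ℝ F) x).orderTop :=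
      fun x => rfl
    refine core3 p pb hdeg (single (⟨-a, Γ.neg_mem haΓ⟩ : Γ) u) ?_ w a hapos ?_ ?_ (hahnSub Γ k) v Γ ?_ hvΓ hA
    · apply (algebraMap (IntermediateField.adjoin (HahnSeries Γ k) {α}) (HahnSeries ℝ F)).injective
      rw [map_sub, map_pow, hgen, hα1, ← IsScalarTower.algebraMap_apply, hmap, hemb_single]
    · rw [hw, hgen, hα2]
    · intro f i hi
      rw [hw, hw]
      simp only [map_sum, map_mul, map_pow, hgen, ← IsScalarTower.algebraMap_apply, hmap]
      exact hind f i hi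
    · intro x
      rw [hw, ← IsScalarTower.algebraMap_apply, hmap, hv]


end

theorem ratFunc_X_not_pow (p : ℕ) [hp : Fact p.Prime] (b : RatFunc (ZMod p)) :
    b ^ p ≠ RatFunc.X := by
  intro h
  have hb : b ≠ 0 := by
    rintro rfl
    rw [zero_pow hp.out.ne_zero] at h
    exact RatFunc.X_ne_zero h.symm
  have hpow : ∀ n : ℕ, (b ^ n).intDegree = n * b.intDegree := by
    intro n
    induction n with
    | zero => simp
    | succ n ih =>
      rw [pow_succ, RatFunc.intDegree_mul (pow_ne_zero _ hb) hb, ih]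
      push_cast; ring
  have h1 := hpow p
  rw [h, RatFunc.intDegree_X] at h1
  have h2 : (p : ℤ) ∣ 1 := ⟨_, h1⟩
  have h3 : p ∣ 1 := by exact_mod_cast h2
  exact hp.out.one_lt.ne' (Nat.dvd_one.1 h3)

/-- Let `p` be a prime, `Γ` a nonzero subgroup of `ℝ` not isomorphic to `ℤ`, and `a ∈ Γ`,
`a > 0`.  Then there are a field `K` of characteristic `p`, a Henselian valuation ring `A`
with fraction field `K`, a valuation `v : Kˣ → ℝ` with image `Γ` and
`A = {0} ∪ {x : v(x) ≥ 0}`, and a cyclic Galois extension `L/K` of degree `p` such that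
`{v(x) : x ∈ H, x ≠ 0} = {γ ∈ Γ : γ ≥ a}`, where `H` is the ideal of `A` associated
to `L/K`. -/
theorem exists_assoc_ideal_value_set_eq_Ici
    (p : ℕ) (hp : p.Prime) (Γ : AddSubgroup ℝ) (hΓ : Γ ≠ ⊥)
    (hΓZ : ¬Nonempty (↥Γ ≃+ ℤ)) (a : ℝ) (haΓ : a ∈ Γ) (hapos : 0 < a) :
    ∃ (K : Type) (_ : Field K) (_ : CharP K p) (A : ValuationSubring K)
      (_ : HenselianLocalRing ↥A) (v : Kˣ → ℝ),
      (∀ x y : Kˣ, v (x * y) = v x + v y) ∧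
      (∀ x y z : Kˣ, (x : K) + (y : K) = (z : K) → min (v x) (v y) ≤ v z) ∧
      Set.range v = (Γ : Set ℝ) ∧
      (∀ x : Kˣ, ((x : K) ∈ A ↔ 0 ≤ v x)) ∧
      ∃ (L : Type) (_ : Field L) (_ : Algebra K L),
        IsGalois K L ∧ FiniteDimensional K L ∧ IsCyclic (L ≃ₐ[K] L) ∧
        Nat.card (L ≃ₐ[K] L) = p ∧
        ∀ H : Ideal ↥A, IsAssociatedIdeal A L H →
          {r : ℝ | ∃ h ∈ H, ∃ x : Kˣ, (x : K) = ((h : ↥A) : K) ∧ v x = r} =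
            {r : ℝ | r ∈ Γ ∧ a ≤ r} := by
  have : Fact p.Prime := ⟨hp⟩
  have : CharP (RatFunc (ZMod p)) p :=
    charP_of_injective_algebraMap (algebraMap (ZMod p) (RatFunc (ZMod p))).injective p
  exact hahn_main p Γ a haΓ hapos (k := RatFunc (ZMod p))
    (F := AlgebraicClosure (RatFunc (ZMod p))) RatFunc.X (ratFunc_X_not_pow p)
end

section
/- Let p be a prime number, let Γ be a nonzero subgroup of the additive group ℝ which is not isomorphic to ℤ, and let a be a positive real number. Then there exist a field K of characteristic p, a Henselian valuation ring A with field of fractions K, a surjective valuation v : Kˣ → Γ (i.e. v(xy) = v(x) + v(y) and v(x + y) ≥ min(v(x), v(y)) whenever defined) with A = {0} ∪ {x ∈ Kˣ : v(x) ≥ 0}, and a cyclic Galois extension L/K of degree p, such that {v(x) : x ∈ H, x ≠ 0} = {γ ∈ Γ : γ > a}, where H is the ideal of A associated to L/K. -/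
set_option synthInstance.maxHeartbeats 400000
set_option linter.unusedVariables false

section AuxAll
open Filter Topology

section HahnPart

/-- coefficientwise additive map -/
noncomputable def hsMap {Γ R : Type} [AddCommGroup Γ] [LinearOrder Γ] [IsOrderedCancelAddMonoid Γ]
    [CommRing R] (d : Γ → R →+ R) : HahnSeries Γ R →+ HahnSeries Γ R where
  toFun x := ⟨fun g => d g (x.coeff g), x.isPWO_support.mono (fun g hg h => hg (by
    simp [h]))⟩
  map_zero' := by ext g; simp
  map_add' x y := by ext g; simp

theorem hsMap_coeff {Γ R : Type} [AddCommGroup Γ] [LinearOrder Γ] [IsOrderedCancelAddMonoid Γ]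
    [CommRing R] (d : Γ → R →+ R) (x : HahnSeries Γ R) (g : Γ) :
    (hsMap d x).coeff g = d g (x.coeff g) := rfl

theorem hsMap_leib {Γ R : Type} [AddCommGroup Γ] [LinearOrder Γ] [IsOrderedCancelAddMonoid Γ]
    [CommRing R] (d : Γ → R →+ R)
    (hd : ∀ i j a b, d (i + j) (a * b) = a * d j b + b * d i a) (x y : HahnSeries Γ R) :
    hsMap d (x * y) = x * hsMap d y + y * hsMap d x := by
  have key : ∀ z : HahnSeries Γ R, (hsMap d z).support ⊆ z.support := by
    intro z g hg h
    exact hg (by simp [hsMap, h])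
  ext g
  rw [HahnSeries.coeff_add, HahnSeries.coeff_mul_right' y.isPWO_support (key y), mul_comm y,
    HahnSeries.coeff_mul_left' x.isPWO_support (key x), ← Finset.sum_add_distrib, hsMap_coeff,
    HahnSeries.coeff_mul, map_sum]
  refine Finset.sum_congr rfl fun ij hij => ?_
  have := (Finset.mem_antidiagonal.1 hij)
  have := this.2.2
  rw [← this, hd, hsMap_coeff, hsMap_coeff]
  ring

/-- the residue field -/
theorem exists_residue (p : ℕ) [Fact p.Prime] : ∃ (k : Type) (_ : Field k) (_ : CharP k p)
    (D : ℕ → k →+ k) (s : ℕ → k), (∀ m x y, D m (x * y) = x * D m y + y * D m x) ∧ (∀ n, D n (s n) ≠ 0) ∧ ∀ m n, m ≠ n → D m (s n) = 0 := by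
  let Λ := Lex (ℕ →₀ ℤ)
  let k := HahnSeries Λ (ZMod p)
  have hk : CharP k p := charP_of_injective_algebraMap (algebraMap (ZMod p) k).injective p
  let d : ℕ → Λ → ZMod p →+ ZMod p := fun m l => AddMonoidHom.mulLeft (((ofLex l) m : ℤ) : ZMod p)
  have hd : ∀ m i j a b, d m (i + j) (a * b) = a * d m j b + b * d m i a := by
    intro m i j a b
    have : (ofLex (i + j)) m = ofLex i m + ofLex j m := rfl
    simp only [d, AddMonoidHom.coe_mulLeft, this, Int.cast_add]
    ring
  refine ⟨k, inferInstance, hk, fun m => hsMap (d m),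
    fun n => HahnSeries.single (toLex (Finsupp.single n 1)) 1,
    fun m => hsMap_leib (d m) (hd m), ?_, ?_⟩
  · intro n h
    have := congrArg (fun x => HahnSeries.coeff x (toLex (Finsupp.single n 1))) h
    change d n _ (HahnSeries.coeff (HahnSeries.single _ _) _) = 0 at this
    rw [HahnSeries.coeff_single_same] at this
    simp [d] at this
  · intro m n hmn
    ext g
    rw [hsMap_coeff]
    by_cases hg : g = toLex (Finsupp.single n 1)
    · subst hg; simp [d, Finsupp.single_apply, Ne.symm hmn]
    · rw [HahnSeries.coeff_single_of_ne hg]; simp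

variable {Γ : AddSubgroup ℝ} {k : Type} [Field k]

noncomputable def hAbv (Γ : AddSubgroup ℝ) (k : Type) [Field k] : AbsoluteValue (HahnSeries Γ k) ℝ where
  toFun x := open Classical in if x = 0 then 0 else Real.exp (-(x.order : ℝ))
  map_mul' x y := by
    by_cases hx : x = 0
    · simp [hx]
    by_cases hy : y = 0
    · simp [hy]
    simp [hx, hy, HahnSeries.order_mul hx hy, ← Real.exp_add, add_comm]
  nonneg' x := by positivity
  eq_zero' x := by
    by_cases hx : x = 0 <;> simp [hx, Real.exp_ne_zero]
  add_le' x y := by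
    by_cases hx : x = 0
    · subst hx; rw [zero_add]; simp only [if_true, zero_add, le_refl]
    by_cases hy : y = 0
    · subst hy; rw [add_zero]; simp only [if_true, add_zero, le_refl]
    by_cases hxy : x + y = 0
    · simp only [hxy, if_true]; positivity
    simp only [hx, hy, hxy, if_false]
    have := HahnSeries.min_order_le_order_add hxy
    rcases min_le_iff.1 this with h | h
    · have : Real.exp (-((x+y).order : ℝ)) ≤ Real.exp (-(x.order : ℝ)) := by
        apply Real.exp_le_exp.2; simpa using h
      have := Real.exp_pos (-(y.order : ℝ))
      linarith
    · have : Real.exp (-((x+y).order : ℝ)) ≤ Real.exp (-(y.order : ℝ)) := by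
        apply Real.exp_le_exp.2; simpa using h
      have := Real.exp_pos (-(x.order : ℝ))
      linarith

noncomputable instance hNF : NormedField (HahnSeries Γ k) := (hAbv Γ k).toNormedField

theorem h_norm_def (x : HahnSeries Γ k) (hx : x ≠ 0) : ‖x‖ = Real.exp (-(x.order : ℝ)) := by
  change hAbv Γ k x = _
  simp [hAbv, hx]

theorem h_norm_le {x : HahnSeries Γ k} {r : ℝ} (h : ∀ g : Γ, (g : ℝ) < r → x.coeff g = 0) :
    ‖x‖ ≤ Real.exp (-r) := by
  by_cases hx : x = 0
  · simp [hx]; positivity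
  rw [h_norm_def x hx]
  apply Real.exp_le_exp.2
  by_contra hc
  exact hx (HahnSeries.coeff_order_eq_zero.1 (h _ (by linarith)))

theorem h_coeff_zero {x : HahnSeries Γ k} {r : ℝ} (h : ‖x‖ ≤ Real.exp (-r)) (g : Γ) (hg : (g : ℝ) < r) :
    x.coeff g = 0 := by
  by_cases hx : x = 0
  · simp [hx]
  rw [h_norm_def x hx, Real.exp_le_exp] at h
  apply HahnSeries.coeff_eq_zero_of_lt_order
  have : (g : ℝ) < x.order := by linarith
  exact_mod_cast this

theorem h_ultra : IsUltrametricDist (HahnSeries Γ k) := by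
  apply IsUltrametricDist.isUltrametricDist_of_forall_norm_add_le_max_norm
  intro x y
  by_cases hx : x = 0
  · simp [hx]
  by_cases hy : y = 0
  · simp [hy]
  by_cases hxy : x + y = 0
  · simp [hxy]
  rw [h_norm_def _ hx, h_norm_def _ hy, h_norm_def _ hxy]
  have := HahnSeries.min_order_le_order_add hxy
  rcases min_le_iff.1 this with h | h
  · exact le_max_of_le_left (Real.exp_le_exp.2 (by simpa using h))
  · exact le_max_of_le_right (Real.exp_le_exp.2 (by simpa using h))

theorem h_complete : CompleteSpace (HahnSeries Γ k) := by
  apply Metric.complete_of_convergent_controlled_sequences (fun n => Real.exp (-((n : ℝ) + 1)))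
    (fun n => Real.exp_pos _)
  intro u hu
  have hu' : ∀ N n m : ℕ, N ≤ n → N ≤ m → ∀ g : Γ, (g : ℝ) < N + 1 → (u n).coeff g = (u m).coeff g := by
    intro N n m hn hm g hg
    have h1 := (hu N n m hn hm).le
    rw [dist_eq_norm] at h1
    have := h_coeff_zero h1 g hg
    rwa [HahnSeries.coeff_sub, sub_eq_zero] at this
  let c : Γ → k := fun g => (u ⌈(g : ℝ)⌉₊).coeff g
  have hc : ∀ (N : ℕ) (g : Γ), (g : ℝ) ≤ N → c g = (u N).coeff g := by
    intro N g hg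
    refine hu' ⌈(g : ℝ)⌉₊ _ _ le_rfl (Nat.ceil_le.2 hg) g ?_
    have := Nat.le_ceil (g : ℝ)
    linarith
  have hpwo : (Function.support c).IsPWO := by
    rw [Set.isPWO_iff_isWF, Set.isWF_iff_no_descending_seq]
    intro f hf hmem
    have h0 : ∀ i, (f i : ℝ) ≤ ⌈(f 0 : ℝ)⌉₊ := fun i =>
      le_trans (by exact_mod_cast hf.antitone (Nat.zero_le i)) (Nat.le_ceil _)
    have hw := (u ⌈(f 0 : ℝ)⌉₊).isWF_support
    rw [Set.isWF_iff_no_descending_seq] at hw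
    refine hw f hf fun i => ?_
    have := hmem i
    rw [Function.mem_support, hc _ _ (h0 i)] at this
    exact this
  refine ⟨⟨c, hpwo⟩, ?_⟩
  rw [tendsto_iff_norm_sub_tendsto_zero]
  have hlim : Tendsto (fun n : ℕ => Real.exp (-(n : ℝ))) atTop (𝓝 0) :=
    Real.tendsto_exp_neg_atTop_nhds_zero.comp tendsto_natCast_atTop_atTop
  refine squeeze_zero (fun _ => norm_nonneg _) (fun n => ?_) hlim
  apply h_norm_le
  intro g hg
  rw [HahnSeries.coeff_sub, sub_eq_zero]
  exact (hc n g hg.le).symm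

noncomputable def hG (e : ℕ ↪o Γ) (s : ℕ → k) : HahnSeries Γ k :=
  HahnSeries.embDomain e ⟨s, by rw [Set.isPWO_iff_isWF]; exact wellFounded_lt.wellFoundedOn⟩

theorem hG_coeff (e : ℕ ↪o Γ) (s : ℕ → k) (n : ℕ) : (hG e s).coeff (e n) = s n :=
  HahnSeries.embDomain_coeff

theorem hG_coeff' (e : ℕ ↪o Γ) (s : ℕ → k) (g : Γ) (h : ∀ n, e n ≠ g) : (hG e s).coeff g = 0 :=
  HahnSeries.embDomain_of_notMem_range (by rintro ⟨n, hn⟩; exact h n hn)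

end HahnPart

theorem hahn_exists (p : ℕ) [Fact p.Prime] (Γ : AddSubgroup ℝ) (hΓ : Γ ≠ ⊥)
    (γ : ℕ → ℝ) (hm : ∀ n, γ n ∈ Γ) (hγ : StrictAnti γ) :
    ∃ (M : Type) (_ : NontriviallyNormedField M) (_ : CompleteSpace M) (_ : IsUltrametricDist M)
      (_ : CharP M p) (D : ℕ → M →+ M) (G : M) (g : ℕ → M),
      (∀ m x y, D m (x * y) = x * D m y + y * D m x) ∧
      (∀ m x, ‖D m x‖ ≤ ‖x‖) ∧ (∀ r ∈ Γ, ∃ t : M, ‖t‖ = Real.exp (-r) ∧ ∀ m, D m t = 0) ∧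
      (∀ x : M, x ≠ 0 → ∃ r ∈ Γ, ‖x‖ = Real.exp (-r)) ∧
      (∀ m, ‖D m G‖ = Real.exp (γ m)) ∧ (∀ n m, n ≤ m → D m (g n) = 0) ∧
      (∀ n, ‖G - g n‖ ≤ Real.exp (γ n)) ∧ g 0 = 0 := by
  obtain ⟨k, _, _, D, s, hl, hs, hs'⟩ := exists_residue p
  have D1 : ∀ m, D m 1 = 0 := fun m => by
    have := hl m 1 1
    simpa using this
  let M := HahnSeries Γ k
  let E : ℕ → M →+ M := fun m => hsMap (fun _ => D m)
  have hE : ∀ m x g, (E m x).coeff g = D m (x.coeff g) := fun m x g => rfl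
  have hns : ∀ (g : Γ) (c : k), c ≠ 0 → ‖(HahnSeries.single g c : M)‖ = Real.exp (-(g : ℝ)) := by
    intro g c hc
    rw [h_norm_def _ (by simpa using hc), HahnSeries.order_single hc]
  have hnt : ∃ x : M, 1 < ‖x‖ := by
    obtain ⟨r, hr, hr0⟩ := Γ.bot_or_exists_ne_zero.resolve_left hΓ
    rcases lt_or_gt_of_ne hr0 with h | h
    · refine ⟨HahnSeries.single ⟨r, hr⟩ 1, ?_⟩
      rw [hns _ _ one_ne_zero]; simpa using h
    · refine ⟨HahnSeries.single (-⟨r, hr⟩) 1, ?_⟩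
      rw [hns _ _ one_ne_zero]; simpa using h
  let e : ℕ ↪o Γ := OrderEmbedding.ofStrictMono (fun n => (-⟨γ n, hm n⟩ : Γ)) (by
    intro i j hij
    have := hγ hij
    change -(⟨γ i, hm i⟩ : Γ) < -⟨γ j, hm j⟩
    rw [neg_lt_neg_iff]; exact this)
  have he : ∀ n, ((e n : Γ) : ℝ) = - γ n := fun n => rfl
  let : NontriviallyNormedField M := { (hNF : NormedField M) with non_trivial := hnt }
  refine ⟨M, inferInstance, h_complete, h_ultra,
    charP_of_injective_algebraMap (algebraMap k M).injective p, E, hG e s,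
    fun n => hG e (fun i => if i < n then s i else 0), fun m => hsMap_leib _ (fun _ _ => hl m), ?_, ?_, ?_, ?_, ?_, ?_, ?_⟩
  · intro m x
    by_cases hx : x = 0
    · rw [hx, map_zero]
    rw [h_norm_def x hx]
    refine h_norm_le fun g hg => ?_
    rw [hE, HahnSeries.coeff_eq_zero_of_lt_order (by exact_mod_cast hg), map_zero]
  · intro r hr
    refine ⟨HahnSeries.single ⟨r, hr⟩ 1, hns _ _ one_ne_zero, fun m => ?_⟩
    ext g
    rw [hE]
    by_cases hg : g = ⟨r, hr⟩
    · subst hg; simp [D1]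
    · rw [HahnSeries.coeff_single_of_ne hg]; simp
  · intro x hx
    exact ⟨x.order, x.order.2, h_norm_def x hx⟩
  · intro m
    have : E m (hG e s) = HahnSeries.single (e m) (D m (s m)) := by
      ext g
      rw [hE]
      by_cases h : ∃ n, e n = g
      · obtain ⟨n, rfl⟩ := h
        rw [hG_coeff]
        by_cases hmn : m = n
        · subst hmn; simp
        · rw [hs' _ _ hmn, HahnSeries.coeff_single_of_ne]
          exact fun h => hmn (e.injective h).symm
      · push Not at h
        rw [hG_coeff' _ _ _ h, map_zero, HahnSeries.coeff_single_of_ne]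
        exact fun h' => h m h'.symm
    rw [this, hns _ _ (hs m), he, neg_neg]
  · intro n m hnm
    ext g
    rw [hE]
    by_cases h : ∃ n, e n = g
    · obtain ⟨i, rfl⟩ := h
      rw [hG_coeff]
      split_ifs with hi
      · rw [hs' _ _ (by omega)]; simp
      · simp
    · push Not at h
      rw [hG_coeff' _ _ _ h, map_zero]; simp
  · intro n
    have : γ n = - -γ n := by simp
    rw [this]
    refine h_norm_le fun g hg => ?_
    rw [HahnSeries.coeff_sub]
    by_cases h : ∃ n, e n = g
    · obtain ⟨i, rfl⟩ := h
      rw [hG_coeff, hG_coeff]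
      rw [he] at hg
      have : i < n := hγ.lt_iff_gt.1 (by linarith)
      simp [this]
    · push Not at h
      rw [hG_coeff' _ _ _ h, hG_coeff' _ _ _ h, sub_zero]
  · ext g
    by_cases h : ∃ n, e n = g
    · obtain ⟨i, rfl⟩ := h
      rw [hG_coeff]; simp
    · push Not at h
      rw [hG_coeff' _ _ _ h]; simp

theorem hens_of_complete {K : Type} [NormedField K] [CompleteSpace K] [IsUltrametricDist K]
    (A : ValuationSubring K) (hA : ∀ x, x ∈ A ↔ ‖x‖ ≤ 1) : HenselianLocalRing ↥A := by
  have hunit : ∀ x : A, ‖(x : K)‖ = 1 → IsUnit x := by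
    intro x hx
    have h0 : (x : K) ≠ 0 := by rw [← norm_ne_zero_iff, hx]; exact one_ne_zero
    refine IsUnit.of_mul_eq_one ⟨(x : K)⁻¹, (hA _).2 (by simp [hx])⟩ ?_
    ext; simp [h0]
  have hmax : ∀ x : A, x ∈ IsLocalRing.maximalIdeal A → ‖(x : K)‖ < 1 := by
    intro x hx
    rw [IsLocalRing.mem_maximalIdeal, mem_nonunits_iff] at hx
    exact lt_of_le_of_ne ((hA _).1 x.2) (fun h => hx (hunit x h))
  refine { is_henselian := ?_ }
  intro f hf a₀ h1 h2
  by_cases h0 : f.eval a₀ = 0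
  · exact ⟨a₀, h0, by simp⟩
  set ϖ : A := f.eval a₀ with hϖ
  have hlt := hmax _ h1
  have hpos : 0 < ‖(ϖ : K)‖ := norm_pos_iff.2 (by simpa using h0)
  set I : Ideal A := Ideal.span {ϖ} with hI
  have hmem : ∀ (n : ℕ) (x : A), x ∈ (I ^ n • ⊤ : Submodule A A) ↔ ‖(x : K)‖ ≤ ‖(ϖ : K)‖ ^ n := by
    intro n x
    rw [smul_eq_mul, Ideal.mul_top, hI, Ideal.span_singleton_pow, Ideal.mem_span_singleton]
    constructor
    · rintro ⟨y, rfl⟩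
      have := (hA _).1 y.2
      simp only [MulMemClass.coe_mul, SubmonoidClass.coe_pow, norm_mul, norm_pow]
      exact mul_le_of_le_one_right (by positivity) this
    · intro h
      refine ⟨⟨(x : K) / (ϖ : K) ^ n, (hA _).2 ?_⟩, ?_⟩
      · rw [norm_div, norm_pow]
        exact div_le_one_of_le₀ h (by positivity)
      · ext
        have : (ϖ : K) ≠ 0 := norm_pos_iff.1 hpos
        simp only [MulMemClass.coe_mul, SubmonoidClass.coe_pow]
        field_simp
  have hpow : Tendsto (fun n : ℕ => ‖(ϖ : K)‖ ^ n) atTop (𝓝 0) :=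
    tendsto_pow_atTop_nhds_zero_of_lt_one hpos.le hlt
  have hA' : IsClosed {x : K | ‖x‖ ≤ 1} := isClosed_le continuous_norm continuous_const
  have : IsAdicComplete I A := by
    refine { haus' := ?_, prec' := ?_ }
    · intro x hx
      have : ∀ n : ℕ, ‖(x : K)‖ ≤ ‖(ϖ : K)‖ ^ n := by
        intro n
        have := SModEq.sub_mem.1 (hx n)
        rwa [sub_zero, hmem] at this
      have := ge_of_tendsto' hpow this
      have : (x : K) = 0 := norm_le_zero_iff.1 this
      exact_mod_cast this
    · intro u hu
      have hu' : ∀ m n, m ≤ n → ‖(u m : K) - u n‖ ≤ ‖(ϖ : K)‖ ^ m := by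
        intro m n hmn
        have := SModEq.sub_mem.1 (hu hmn)
        rwa [hmem] at this
      have hc : CauchySeq (fun n => (u n : K)) := by
        refine cauchySeq_of_le_tendsto_0' (fun n => ‖(ϖ : K)‖ ^ n) ?_ hpow
        intro n m hnm
        rw [dist_eq_norm]; exact hu' n m hnm
      obtain ⟨l, hl⟩ := cauchySeq_tendsto_of_complete hc
      have hlA : l ∈ A := (hA _).2 (hA'.mem_of_tendsto hl (Eventually.of_forall fun n => (hA _).1 (u n).2))
      refine ⟨⟨l, hlA⟩, fun n => SModEq.sub_mem.2 ((hmem _ _).2 ?_)⟩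
      have ht : Tendsto (fun m => ‖(u n : K) - u m‖) atTop (𝓝 ‖(u n : K) - l‖) :=
        (tendsto_const_nhds.sub hl).norm
      exact le_of_tendsto ht (eventually_atTop.2 ⟨n, fun m hm => hu' n m hm⟩)
  obtain ⟨x, hx, hx'⟩ := HenselianRing.is_henselian (I := I) f hf a₀ (Ideal.mem_span_singleton_self _)
    (h2.map _)
  refine ⟨x, hx, ?_⟩
  exact (Ideal.span_le.2 (by simpa using h1) : I ≤ _) hx'

section Core
open Polynomial

variable {p : ℕ} [Fact p.Prime] {K M N : Type} [Field K] [NormedField M] [NormedField N]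
  [IsUltrametricDist M] [IsUltrametricDist N] [CharP M p]
  [Algebra K M] [Algebra K N] [NormedAlgebra M N] [IsScalarTower K M N]

theorem norm_natCast_eq_one {M : Type} [NormedField M] [IsUltrametricDist M] [CharP M p]
    (j : ℕ) (hj : ¬ p ∣ j) : ‖(j : M)‖ = 1 := by
  have h : (j : ZMod p) ≠ 0 := by rwa [Ne, ZMod.natCast_eq_zero_iff]
  have h1 : (j : ZMod p) ^ (p - 1) = 1 := ZMod.pow_card_sub_one_eq_one h
  have h2 := congrArg (ZMod.castHom dvd_rfl M) h1
  rw [map_pow, map_natCast, map_one] at h2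
  have h3 := congrArg norm h2
  rw [norm_pow, norm_one] at h3
  have hp : 2 ≤ p := (Fact.out : p.Prime).two_le
  exact (pow_eq_one_iff_of_nonneg (norm_nonneg _) (by omega)).1 h3

theorem core_P (D : ℕ → M →+ M) (hl : ∀ m x y, D m (x * y) = x * D m y + y * D m x)
    (hb : ∀ m x, ‖D m x‖ ≤ ‖x‖) (hK : ∀ x : K, Tendsto (fun m => D m (algebraMap K M x)) atTop (𝓝 0))
    (G : M) (ρ : ℝ) (hρ0 : 0 < ρ) (hρ : ∀ m, ρ < ‖D m G‖) (q : K[X]) :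
    ‖aeval G (derivative q)‖ * ρ ≤ ‖aeval G q‖ ∧
      (aeval G q ≠ 0 → ‖aeval G (derivative q)‖ * ρ < ‖aeval G q‖) := by
  have hpow : ∀ (m n : ℕ), D m (G ^ n) = n * G ^ (n - 1) * D m G := by
    intro m n
    induction n with
    | zero => 
      have := hl m 1 1
      simpa using this
    | succ n ih =>
      rw [pow_succ, hl, ih]
      rcases n with _ | n
      · simp
      · simp only [Nat.add_sub_cancel]; push_cast; ring
  have hE : Tendsto (fun m => D m (aeval G q) - aeval G (derivative q) * D m G) atTop (𝓝 0) := by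
    induction q using Polynomial.induction_on' with
    | add f g hf hg =>
      have := hf.add hg
      rw [add_zero] at this
      refine this.congr fun m => ?_
      simp only [map_add]; ring
    | monomial n c =>
      have := (hK c).mul_const (G ^ n)
      rw [zero_mul] at this
      refine this.congr fun m => ?_
      rw [aeval_monomial, derivative_monomial, aeval_monomial, hl, hpow]
      simp only [map_mul, map_natCast]
      ring
  set x := aeval G q with hx
  set y := aeval G (derivative q) with hy
  by_cases hy0 : y = 0
  · rw [hy0, norm_zero, zero_mul]
    exact ⟨norm_nonneg _, fun h => norm_pos_iff.2 h⟩
  have hypos : 0 < ‖y‖ * ρ := mul_pos (norm_pos_iff.2 hy0) hρ0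
  have hev := (tendsto_order.1 hE.norm).2 (‖y‖ * ρ) (by simpa using hypos)
  obtain ⟨m, hm⟩ := hev.exists
  have h1 : ‖y‖ * ρ < ‖y * D m G‖ := by
    rw [norm_mul]; exact mul_lt_mul_of_pos_left (hρ m) (norm_pos_iff.2 hy0)
  have h2 : ‖y * D m G‖ ≤ max ‖D m x‖ ‖D m x - y * D m G‖ := by
    have := IsUltrametricDist.norm_add_le_max (D m x) (-(D m x - y * D m G))
    rwa [← sub_eq_add_neg, sub_sub_cancel, norm_neg] at this
  have h3 : ‖y‖ * ρ < ‖x‖ := by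
    rcases le_max_iff.1 h2 with h | h
    · linarith [hb m x]
    · linarith
  exact ⟨h3.le, fun _ => h3⟩

theorem core_hasse {G : M} {ρ : ℝ} (hρ0 : 0 < ρ)
    (hP : ∀ q : K[X], ‖aeval G (derivative q)‖ * ρ ≤ ‖aeval G q‖ ∧
      (aeval G q ≠ 0 → ‖aeval G (derivative q)‖ * ρ < ‖aeval G q‖))
    (q : K[X]) (j : ℕ) (hj : j < p) :
    ‖aeval G (hasseDeriv j q)‖ * ρ ^ j ≤ ‖aeval G q‖ := by
  have h1 : ∀ j, ‖aeval G (derivative^[j] q)‖ * ρ ^ j ≤ ‖aeval G q‖ := by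
    intro j
    induction j with
    | zero => simp
    | succ n ih =>
      refine le_trans ?_ ih
      rw [Function.iterate_succ_apply', pow_succ', ← mul_assoc]
      exact mul_le_mul_of_nonneg_right (hP _).1 (by positivity)
  have h2 := h1 j
  rw [← factorial_smul_hasseDeriv, LinearMap.smul_apply, map_nsmul, nsmul_eq_mul, norm_mul,
    norm_natCast_eq_one (p := p), one_mul] at h2
  · exact h2
  · rw [(Fact.out : p.Prime).dvd_factorial]; omega

theorem taylor_aeval (q : K[X]) (z w : N) :
    aeval (w + z) q - aeval z q = ∑ j ∈ Finset.range q.natDegree,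
      aeval z (hasseDeriv (j + 1) q) * w ^ (j + 1) := by
  have h := Polynomial.taylor_eval z (q.map (algebraMap K N)) w
  rw [eval_map_algebraMap, eval_eq_sum_range, natDegree_taylor, natDegree_map,
    Finset.sum_range_succ'] at h
  rw [← h]
  simp only [taylor_coeff, pow_zero, mul_one, hasseDeriv_zero', eval_map_algebraMap]
  rw [add_sub_cancel_right]
  refine Finset.sum_congr rfl fun j _ => ?_
  have : hasseDeriv (j + 1) (q.map (algebraMap K N)) = (hasseDeriv (j + 1) q).map (algebraMap K N) := by
    ext i; simp [hasseDeriv_coeff]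
  rw [this, eval_map_algebraMap]

theorem sum_norm_lt {ι : Type} (s : Finset ι) (f : ι → N) (C : ℝ) (hC : 0 < C)
    (h : ∀ i ∈ s, ‖f i‖ < C) : ‖∑ i ∈ s, f i‖ < C := by
  classical
  induction s using Finset.induction_on with
  | empty => simpa using hC
  | insert a s ha ih =>
    rw [Finset.sum_insert ha]
    refine lt_of_le_of_lt (IsUltrametricDist.norm_add_le_max _ _) (max_lt ?_ ?_)
    · exact h a (Finset.mem_insert_self _ _)
    · exact ih fun i hi => h i (Finset.mem_insert_of_mem hi)

theorem norm_eq_of_sub_lt {N : Type} [NormedField N] [IsUltrametricDist N] (x y : N)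
    (h : ‖x - y‖ < ‖y‖) : ‖x‖ = ‖y‖ := by
  have := IsUltrametricDist.norm_add_eq_max_of_norm_ne_norm h.ne
  rw [sub_add_cancel, max_eq_right h.le] at this
  exact this

theorem core_T {G : M} {ρ : ℝ} (hρ0 : 0 < ρ)
    (hP : ∀ q : K[X], ‖aeval G (derivative q)‖ * ρ ≤ ‖aeval G q‖ ∧
      (aeval G q ≠ 0 → ‖aeval G (derivative q)‖ * ρ < ‖aeval G q‖))
    (q : K[X]) (hq : q.natDegree < p) (β : N) (hβ : ‖β‖ < ρ) :
    ‖aeval (β + algebraMap M N G) q‖ = ‖aeval G q‖ := by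
  have hh : ∀ j < p, ‖aeval (algebraMap M N G) (hasseDeriv j q)‖ * ρ ^ j ≤ ‖aeval G q‖ := by
    intro j hj
    rw [aeval_algebraMap_apply, norm_algebraMap']
    exact core_hasse hρ0 hP q j hj
  have e0 : ‖aeval (algebraMap M N G) q‖ = ‖aeval G q‖ := by
    rw [aeval_algebraMap_apply, norm_algebraMap']
  have ht := taylor_aeval q (algebraMap M N G) β
  by_cases h0 : aeval G q = 0
  · rw [h0, norm_zero, norm_eq_zero]
    have e1 : aeval (algebraMap M N G) q = 0 := by rw [← norm_eq_zero, e0, h0, norm_zero]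
    rw [e1, sub_zero] at ht
    rw [ht]
    refine Finset.sum_eq_zero fun j hj => ?_
    have := hh (j + 1) (by have := Finset.mem_range.1 hj; omega)
    rw [h0, norm_zero] at this
    have : ‖aeval (algebraMap M N G) (hasseDeriv (j+1) q)‖ ≤ 0 :=
      nonpos_of_mul_nonpos_left this (by positivity)
    rw [norm_le_zero_iff.1 this, zero_mul]
  · have hpos : 0 < ‖aeval G q‖ := norm_pos_iff.2 h0
    have hlt : ‖aeval (β + algebraMap M N G) q - aeval (algebraMap M N G) q‖ < ‖aeval G q‖ := by
      rw [ht]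
      refine sum_norm_lt _ _ _ hpos fun j hj => ?_
      have := hh (j + 1) (by have := Finset.mem_range.1 hj; omega)
      rw [norm_mul, norm_pow]
      have hb : ‖β‖ ^ (j + 1) < ρ ^ (j + 1) := pow_lt_pow_left₀ hβ (norm_nonneg _) (by omega)
      rcases (norm_nonneg (aeval (algebraMap M N G) (hasseDeriv (j+1) q))).eq_or_lt with h | h
      · rw [← h, zero_mul]; exact hpos
      · exact lt_of_lt_of_le (mul_lt_mul_of_pos_left hb h) this
    rw [← e0] at hlt ⊢
    exact norm_eq_of_sub_lt _ _ hlt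

theorem core_S {G : M} {ρ : ℝ} (hρ0 : 0 < ρ)
    (hP : ∀ q : K[X], ‖aeval G (derivative q)‖ * ρ ≤ ‖aeval G q‖ ∧
      (aeval G q ≠ 0 → ‖aeval G (derivative q)‖ * ρ < ‖aeval G q‖))
    (hρ1 : 1 < ρ) (q : K[X]) (hq : q.natDegree < p) (β : N) (hβ : ‖β‖ < ρ)
    (h0 : aeval (β + algebraMap M N G) q ≠ 0) :
    ‖aeval (β + algebraMap M N G + 1) q - aeval (β + algebraMap M N G) q‖ * ρ <
      ‖aeval (β + algebraMap M N G) q‖ := by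
  have hpos : 0 < ‖aeval (β + algebraMap M N G) q‖ := norm_pos_iff.2 h0
  rw [add_comm _ (1 : N), taylor_aeval q, ← lt_div_iff₀ hρ0]
  refine sum_norm_lt _ _ _ (by positivity) fun j hj => ?_
  have hj := Finset.mem_range.1 hj
  rw [one_pow, mul_one, lt_div_iff₀ hρ0, core_T hρ0 hP q hq β hβ]
  have hd : (hasseDeriv (j + 1) q).natDegree < p :=
    lt_of_le_of_lt (natDegree_hasseDeriv_le _ _) (by omega)
  rw [core_T hρ0 hP _ hd β hβ]
  rw [core_T hρ0 hP q hq β hβ] at hpos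
  rcases j with _ | j
  · rw [zero_add, hasseDeriv_one']
    exact (hP q).2 (norm_pos_iff.1 hpos)
  · have h1 := core_hasse (p := p) hρ0 hP q (j + 1 + 1) (by omega)
    rcases (norm_nonneg (aeval G (hasseDeriv (j+1+1) q))).eq_or_lt with h | h
    · rw [← h, zero_mul]; exact hpos
    · refine lt_of_lt_of_le (mul_lt_mul_of_pos_left ?_ h) h1
      exact lt_self_pow₀ hρ1 (by omega)

end Core

section AS
open Polynomial

theorem artin_schreier_aux {p : ℕ} [hp : Fact p.Prime] {K L : Type} [Field K] [Field L] [Algebra K L]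
    [CharP K p] (α : L) (f : K) (hα : α ^ p - α = algebraMap K L f)
    (hnot : ∀ x : K, algebraMap K L x ≠ α) (hgen : Algebra.adjoin K {α} = ⊤) :
    IsGalois K L ∧ FiniteDimensional K L ∧ Nat.card (L ≃ₐ[K] L) = p ∧
      (∃ σ : L ≃ₐ[K] L, σ α = α + 1 ∧ (∀ τ, τ ∈ Subgroup.zpowers σ)) ∧
      ∀ x : L, ∃ q : K[X], q.natDegree < p ∧ x = aeval α q := by
  classical
  have hp1 : 1 < p := hp.out.one_lt
  have : CharP L p := charP_of_injective_algebraMap (algebraMap K L).injective p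
  set P : K[X] := X ^ p - X - C f with hP
  have hPe : P = X ^ p - (X + C f) := by rw [hP]; ring
  have hdeg1 : (X + C f).degree < (p : WithBot ℕ) := by
    rw [degree_X_add_C]; exact_mod_cast hp1
  have hmon : P.Monic := by rw [hPe]; exact monic_X_pow_sub hdeg1
  have hnd : P.natDegree = p := by
    rw [hPe, natDegree_sub_eq_left_of_natDegree_lt] <;> simp [hp1]
  have hPα : aeval α P = 0 := by simp [hP, hα]
  let ι : ZMod p →+* L := ZMod.castHom dvd_rfl L
  have hroot : ∀ i : ZMod p, aeval (α + ι i) P = 0 := by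
    intro i
    have : (ι i) ^ p = ι i := by rw [← map_pow, ZMod.pow_card]
    have h2 : (α + ι i) ^ p = α ^ p + ι i := by rw [add_pow_char, this]
    have : (α + ι i) ^ p - (α + ι i) - algebraMap K L f = 0 := by rw [h2, ← hα]; ring
    simpa [hP] using this
  have hnd' : (P.map (algebraMap K L)).natDegree = p := by rw [natDegree_map, hnd]
  have hne : P.map (algebraMap K L) ≠ 0 := (hmon.map _).ne_zero
  let S : Finset L := Finset.univ.image (fun i : ZMod p => α + ι i)
  have hScard : S.card = p := by
    rw [Finset.card_image_of_injective, Finset.card_univ, ZMod.card]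
    intro i j hij
    exact ι.injective (add_left_cancel hij)
  have hSsub : S ⊆ (P.map (algebraMap K L)).roots.toFinset := by
    intro x hx
    obtain ⟨i, -, rfl⟩ := Finset.mem_image.1 hx
    rw [Multiset.mem_toFinset, mem_roots hne, IsRoot, eval_map_algebraMap]
    exact hroot i
  have hc1 : (P.map (algebraMap K L)).roots.toFinset.card ≤ Multiset.card (P.map (algebraMap K L)).roots :=
    Multiset.toFinset_card_le _
  have hc2 := card_roots' (P.map (algebraMap K L))
  have hc3 := Finset.card_le_card hSsub
  have hSeq : S = (P.map (algebraMap K L)).roots.toFinset :=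
    Finset.eq_of_subset_of_card_le hSsub (by omega)
  have hsplit : (P.map (algebraMap K L)).Splits := by
    rw [splits_iff_card_roots]; omega
  have hsep : P.Separable := by
    rw [hP, Separable]
    have : derivative (X ^ p - X - C f : K[X]) = -1 := by simp [derivative_X_pow]
    rw [this]
    exact isCoprime_one_right.neg_right
  have : P.IsSplittingField K L := ⟨hsplit, by
    rw [eq_top_iff, ← hgen]
    refine Algebra.adjoin_mono ?_
    rw [Set.singleton_subset_iff, mem_rootSet]
    exact ⟨hmon.ne_zero, hPα⟩⟩
  have hG : IsGalois K L := IsGalois.of_separable_splitting_field hsep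
  have hF : FiniteDimensional K L := IsSplittingField.finiteDimensional L P
  have hq : ∀ x : L, ∃ q : K[X], q.natDegree < p ∧ x = aeval α q := by
    intro x
    have hx : x ∈ Algebra.adjoin K {α} := by rw [hgen]; trivial
    rw [Algebra.adjoin_singleton_eq_range_aeval] at hx
    obtain ⟨q, rfl⟩ := hx
    refine ⟨q %ₘ P, ?_, ?_⟩
    · rw [← hnd]; exact natDegree_modByMonic_lt _ hmon (by intro h; rw [h] at hnd; simp at hnd; omega)
    · conv_lhs => rw [← modByMonic_add_div q P]
      simp [hPα]
  have hcex : ∀ τ : L ≃ₐ[K] L, ∃ i : ZMod p, τ α = α + ι i := by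
    intro τ
    have h : τ α ∈ S := by
      rw [hSeq, Multiset.mem_toFinset, mem_roots hne, IsRoot, eval_map_algebraMap]
      have := aeval_algHom_apply τ.toAlgHom α P
      rw [hPα] at this
      simpa using this
    obtain ⟨i, -, hi⟩ := Finset.mem_image.1 h
    exact ⟨i, hi.symm⟩
  choose c hc using hcex
  have hιfix : ∀ (τ : L ≃ₐ[K] L) (i : ZMod p), τ (ι i) = ι i := by
    intro τ i
    have : ((τ : L →+* L).comp ι) = ι := Subsingleton.elim _ _
    exact congrArg (fun g : ZMod p →+* L => g i) this
  have hcmul : ∀ τ₁ τ₂, c (τ₁ * τ₂) = c τ₁ + c τ₂ := by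
    intro τ₁ τ₂
    have h := hc (τ₁ * τ₂)
    rw [AlgEquiv.mul_apply, hc τ₂, map_add, hιfix, hc τ₁, add_assoc, ← map_add] at h
    exact (ι.injective (add_left_cancel h)).symm
  have hcinj : Function.Injective c := by
    intro τ₁ τ₂ h
    ext x
    obtain ⟨q, -, rfl⟩ := hq x
    have h1 := aeval_algHom_apply τ₁.toAlgHom α q
    have h2 := aeval_algHom_apply τ₂.toAlgHom α q
    have e : τ₁ α = τ₂ α := by rw [hc, hc, h]
    change aeval (τ₁ α) q = τ₁ _ at h1
    change aeval (τ₂ α) q = τ₂ _ at h2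
    rw [← h1, ← h2, e]
  let φ : (L ≃ₐ[K] L) →* Multiplicative (ZMod p) :=
    MonoidHom.mk' (fun τ => Multiplicative.ofAdd (c τ)) (by intro a b; rw [hcmul]; rfl)
  have hφ : Function.Injective φ := fun a b h => hcinj (Multiplicative.ofAdd.injective h)
  have hdvd : Nat.card (L ≃ₐ[K] L) ∣ p := by
    have := Subgroup.card_dvd_of_injective φ hφ
    rwa [Nat.card_congr Multiplicative.toAdd, Nat.card_zmod] at this
  have hcard : Nat.card (L ≃ₐ[K] L) = p := by
    rcases (Nat.dvd_prime hp.out).1 hdvd with h | h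
    · exfalso
      have hss : Subsingleton (L ≃ₐ[K] L) := (Nat.card_eq_one_iff_unique.1 h).1
      have : α ∈ (⊥ : IntermediateField K L) := by
        rw [IsGalois.mem_bot_iff_fixed]
        intro τ
        rw [Subsingleton.elim τ 1]; rfl
      obtain ⟨x, hx⟩ := IntermediateField.mem_bot.1 this
      exact hnot x hx
    · exact h
  refine ⟨hG, hF, hcard, ?_, hq⟩
  have hbij : Function.Bijective c := by
    have : Finite (L ≃ₐ[K] L) := Nat.finite_of_card_ne_zero (by rw [hcard]; omega)
    rw [Nat.bijective_iff_injective_and_card]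
    exact ⟨hcinj, by rw [hcard, Nat.card_zmod]⟩
  obtain ⟨σ, hσ⟩ := hbij.2 1
  refine ⟨σ, by rw [hc, hσ, map_one], fun τ => ?_⟩
  have hpow : ∀ n : ℕ, c (σ ^ n) = n := by
    intro n
    induction n with
    | zero =>
      have := hcmul 1 1
      rw [mul_one] at this
      simpa using this
    | succ n ih => rw [pow_succ, hcmul, ih, hσ]; push_cast; rfl
  refine ⟨((c τ).val : ℤ), ?_⟩
  apply hcinj
  change c (σ ^ ((c τ).val : ℤ)) = c τ
  rw [zpow_natCast, hpow, ZMod.natCast_zmod_val]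

end AS

section Fin5
open Polynomial
theorem sum_norm_lt' {N : Type} [NormedField N] [IsUltrametricDist N] {ι : Type} (s : Finset ι) (f : ι → N) (C : ℝ) (hC : 0 < C)
    (h : ∀ i ∈ s, ‖f i‖ < C) : ‖∑ i ∈ s, f i‖ < C := by
  classical
  induction s using Finset.induction_on with
  | empty => simpa using hC
  | insert a s ha ih =>
    rw [Finset.sum_insert ha]
    refine lt_of_le_of_lt (IsUltrametricDist.norm_add_le_max _ _) (max_lt ?_ ?_)
    · exact h a (Finset.mem_insert_self _ _)
    · exact ih fun i hi => h i (Finset.mem_insert_of_mem hi)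

theorem integral_norm_le {A L : Type} [CommRing A] [NormedField L] [IsUltrametricDist L]
    [Algebra A L] (hA : ∀ x : A, ‖algebraMap A L x‖ ≤ 1) (b : L) (hb : IsIntegral A b) :
    ‖b‖ ≤ 1 := by
  obtain ⟨P, hm, hP⟩ := hb
  by_contra! h
  rw [eval₂_eq_sum_range, Finset.sum_range_succ, hm.coeff_natDegree, map_one, one_mul] at hP
  have h1 : ‖∑ i ∈ Finset.range P.natDegree, algebraMap A L (P.coeff i) * b ^ i‖ <
      ‖b‖ ^ P.natDegree := by
    refine sum_norm_lt' _ _ _ (by positivity) fun i hi => ?_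
    rw [norm_mul, norm_pow]
    have : ‖b‖ ^ i < ‖b‖ ^ P.natDegree := pow_lt_pow_right₀ h (Finset.mem_range.1 hi)
    have h2 : 0 < ‖b‖ ^ i := by positivity
    nlinarith [hA (P.coeff i)]
  rw [eq_neg_of_add_eq_zero_left hP, norm_neg, norm_pow] at h1
  exact lt_irrefl _ h1

theorem span_norm_lt {R L : Type} [CommRing R] [NormedField L] [IsUltrametricDist L]
    (φ : R →+* L) (hφ : ∀ r, ‖φ r‖ ≤ 1) (S : Set R) (c : ℝ) (hc : 0 < c)
    (hS : ∀ s ∈ S, ‖φ s‖ < c) (x : R) (hx : x ∈ Ideal.span S) : ‖φ x‖ < c := by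
  induction hx using Submodule.span_induction with
  | mem x hx => exact hS x hx
  | zero => simpa using hc
  | add x y _ _ h1 h2 =>
    rw [map_add]
    exact lt_of_le_of_lt (IsUltrametricDist.norm_add_le_max _ _) (max_lt h1 h2)
  | smul r x _ h =>
    rw [smul_eq_mul, map_mul, norm_mul]
    nlinarith [hφ r, norm_nonneg (φ x), norm_nonneg (φ r)]

theorem final_abs {p : ℕ} [hp : Fact p.Prime] (Γ : AddSubgroup ℝ) (a : ℝ) (ha : 0 < a)
    {K L : Type} [NormedField K] [CompleteSpace K] [IsUltrametricDist K] [CharP K p]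
    [NormedField L] [IsUltrametricDist L] [Algebra K L] (hnorm : ∀ x : K, ‖algebraMap K L x‖ = ‖x‖)
    (hat : ∀ r ∈ Γ, ∃ t : K, ‖t‖ = Real.exp (-r))
    (hval : ∀ x : K, x ≠ 0 → ∃ r ∈ Γ, ‖x‖ = Real.exp (-r))
    (α : L) (f : K) (hα : α ^ p - α = algebraMap K L f)
    (hnot : ∀ x : K, algebraMap K L x ≠ α) (hgen : Algebra.adjoin K {α} = ⊤)
    (h2 : ∀ q : K[X], q.natDegree < p → ‖aeval (α + 1) q‖ = ‖aeval α q‖)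
    (h3 : ∀ q : K[X], q.natDegree < p → aeval α q ≠ 0 →
      ‖aeval (α + 1) q - aeval α q‖ * Real.exp (a / p) < ‖aeval α q‖)
    (γ : ℕ → ℝ) (hγ : ∀ c > a / p, ∃ n, γ n < c)
    (g : ℕ → K) (h4 : ∀ n, Real.exp (a / p) < ‖α - algebraMap K L (g n)‖)
    (h5 : ∀ n, ‖α - algebraMap K L (g n)‖ ≤ Real.exp (γ n)) :
    ∃ (A : ValuationSubring K) (_ : HenselianLocalRing ↥A) (v : Kˣ → ℝ),
      (∀ x y : Kˣ, v (x * y) = v x + v y) ∧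
      (∀ x y z : Kˣ, (x : K) + (y : K) = (z : K) → min (v x) (v y) ≤ v z) ∧
      Set.range v = (Γ : Set ℝ) ∧
      (∀ x : Kˣ, ((x : K) ∈ A ↔ 0 ≤ v x)) ∧
        IsGalois K L ∧ FiniteDimensional K L ∧ IsCyclic (L ≃ₐ[K] L) ∧
        Nat.card (L ≃ₐ[K] L) = p ∧
        ∀ H : Ideal ↥A, IsAssociatedIdeal A L H →
          {r : ℝ | ∃ h ∈ H, ∃ x : Kˣ, (x : K) = ((h : ↥A) : K) ∧ v x = r} =
            {r : ℝ | r ∈ Γ ∧ a < r} := by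
  have hp0 : (0 : ℝ) < p := by exact_mod_cast hp.out.pos
  let A : ValuationSubring K :=
    { carrier := {x | ‖x‖ ≤ 1}
      mul_mem' := fun {x y} hx hy => by
        simp only [Set.mem_ofPred_eq, norm_mul] at *
        exact mul_le_one₀ hx (norm_nonneg _) hy
      one_mem' := by simp
      add_mem' := fun {x y} hx hy => by
        simp only [Set.mem_ofPred_eq] at *
        exact le_trans (IsUltrametricDist.norm_add_le_max _ _) (max_le hx hy)
      zero_mem' := by simp
      neg_mem' := fun {x} hx => by simpa using hx
      mem_or_inv_mem' := fun x => by
        simp only [Set.mem_ofPred_eq, norm_inv]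
        rcases le_total ‖x‖ 1 with h | h
        · exact Or.inl h
        · exact Or.inr (inv_le_one_of_one_le₀ h) }
  have hA : ∀ x, x ∈ A ↔ ‖x‖ ≤ 1 := fun x => Iff.rfl
  have hupos : ∀ x : Kˣ, 0 < ‖(x : K)‖ := fun x => norm_pos_iff.2 x.ne_zero
  obtain ⟨hG, hF, hcard, ⟨σ, hσα, hσ⟩, hq⟩ := artin_schreier_aux (p := p) α f hα hnot hgen
  refine ⟨A, hens_of_complete A hA, fun x => -Real.log ‖(x : K)‖, ?_, ?_, ?_, ?_, hG, hF,
    isCyclic_of_prime_card (p := p) hcard, hcard, ?_⟩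
  · intro x y
    beta_reduce
    rw [Units.val_mul, norm_mul, Real.log_mul (hupos x).ne' (hupos y).ne']; ring
  · intro x y z h
    have h1 : ‖(z : K)‖ ≤ max ‖(x : K)‖ ‖(y : K)‖ := by
      rw [← h]; exact IsUltrametricDist.norm_add_le_max _ _
    rcases le_max_iff.1 h1 with h | h
    · exact le_trans (min_le_left _ _) (neg_le_neg (Real.log_le_log (hupos z) h))
    · exact le_trans (min_le_right _ _) (neg_le_neg (Real.log_le_log (hupos z) h))
  · ext r
    constructor
    · rintro ⟨x, rfl⟩
      obtain ⟨r, hr, h⟩ := hval x x.ne_zero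
      simp only [h, Real.log_exp, neg_neg]
      exact hr
    · intro hr
      obtain ⟨t, ht⟩ := hat r hr
      have : t ≠ 0 := by rw [← norm_ne_zero_iff, ht]; exact (Real.exp_pos _).ne'
      exact ⟨Units.mk0 t this, by simp [ht]⟩
  · intro x
    rw [hA, neg_nonneg, Real.log_nonpos_iff (norm_nonneg _)]
  intro H hH
  let instA : Algebra ↥A L := ((algebraMap K L).comp A.subtype).toAlgebra
  have instT : IsScalarTower ↥A K L := IsScalarTower.of_algebraMap_eq fun x => rfl
  have hH1 := @hH instA instT σ hσ
  have haeσ : ∀ q : K[X], σ (aeval α q) = aeval (α + 1) q := by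
    intro q
    have h1 := aeval_algHom_apply σ.toAlgHom α q
    change aeval (σ α) q = σ _ at h1
    rw [← h1, hσα]
  have hσn : ∀ x, ‖σ x‖ = ‖x‖ := by
    intro x
    obtain ⟨q, hd, rfl⟩ := hq x
    rw [haeσ, h2 q hd]
  have hτn : ∀ (τ : L ≃ₐ[K] L) x, ‖τ x‖ = ‖x‖ := by
    intro τ x
    have hmem : σ ∈ ({ carrier := {τ | ∀ x, ‖τ x‖ = ‖x‖}
                       mul_mem' := fun {s t} hs ht x => by
                        rw [AlgEquiv.mul_apply]; exact (hs _).trans (ht _)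
                       one_mem' := fun x => rfl
                       inv_mem' := fun {s} hs x => by
                        have := hs (s⁻¹ x)
                        rw [← this, ← AlgEquiv.mul_apply, mul_inv_cancel]; rfl } :
                        Subgroup (L ≃ₐ[K] L)) := hσn
    exact (Subgroup.zpowers_le.2 hmem (hσ τ)) x
  have hN : ∀ b : L, ‖Algebra.norm K b‖ = ‖b‖ ^ p := by
    intro b
    rw [← hnorm, Algebra.norm_eq_prod_automorphisms, norm_prod, Finset.prod_congr rfl (fun τ _ => hτn τ b),
      Finset.prod_const, Finset.card_univ, ← Nat.card_eq_fintype_card, hcard]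
  have hA1 : ∀ x : A, ‖algebraMap A L x‖ ≤ 1 := by
    intro x
    change ‖algebraMap K L (x : K)‖ ≤ 1
    rw [hnorm]; exact x.2
  have hE : Real.exp (-(a / p)) ^ p = Real.exp (-a) := by
    rw [← Real.exp_nat_mul]; congr 1; field_simp
  ext r
  simp only [Set.mem_ofPred_eq]
  constructor
  · rintro ⟨h, hh, x, hx, rfl⟩
    have hlt : ‖(h : K)‖ < Real.exp (-a) := by
      rw [hH1] at hh
      refine span_norm_lt A.subtype (fun r => r.2) _ _ (Real.exp_pos _) ?_ h hh
      rintro s ⟨b, hb, hs⟩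
      have hb1 : ‖(b : L)‖ < Real.exp (-(a / p)) := by
        refine span_norm_lt (algebraMap ↥(integralClosure ↥A L) L)
          (fun b => integral_norm_le hA1 _ b.2) _ _ (Real.exp_pos _) ?_ b hb
        rintro c ⟨y, hy⟩
        change ‖(c : L)‖ < _
        have hy0 : (y : L) ≠ 0 := y.ne_zero
        have hyp : 0 < ‖(y : L)‖ := norm_pos_iff.2 hy0
        have e : (c : L) = (σ (y : L) - y) / y := by rw [hy]; field_simp
        obtain ⟨q, hd, hqy⟩ := hq y
        have := h3 q hd (by rw [← hqy]; exact hy0)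
        rw [← haeσ, ← hqy] at this
        rw [e, norm_div, div_lt_iff₀ hyp, Real.exp_neg, inv_mul_eq_div, lt_div_iff₀ (Real.exp_pos _)]
        exact this
      change ‖algebraMap A K s‖ < _
      rw [hs, hN, ← hE]
      exact pow_lt_pow_left₀ hb1 (norm_nonneg _) hp.out.ne_zero
    have h1 : ‖(x : K)‖ < Real.exp (-a) := by rw [hx]; exact hlt
    obtain ⟨r, hr, h⟩ := hval x x.ne_zero
    simp only [h, Real.log_exp, neg_neg]
    rw [h, Real.exp_lt_exp] at h1
    exact ⟨hr, by linarith⟩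
  · rintro ⟨hr, har⟩
    obtain ⟨n, hn⟩ := hγ (r / p) (div_lt_div_of_pos_right har hp0)
    have hn' : p * γ n < r := by rwa [lt_div_iff₀ hp0, mul_comm] at hn
    set αn := α - algebraMap K L (g n) with hαn
    have hαn1 : 1 < ‖αn‖ := lt_trans (by rw [Real.one_lt_exp_iff]; positivity) (h4 n)
    have hαn0 : αn ≠ 0 := norm_pos_iff.1 (by linarith)
    have hcharL : CharP L p := charP_of_injective_algebraMap (algebraMap K L).injective p
    set fn := f - g n ^ p + g n with hfn
    have hαf : αn ^ p - αn = algebraMap K L fn := by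
      rw [hαn, sub_pow_char, hfn, map_add, map_sub, ← hα, map_pow]; ring
    have hfn1 : 1 ≤ ‖fn‖ := by
      by_contra! h
      have h6 : αn ^ p = algebraMap K L fn + αn := by rw [← hαf]; ring
      have h7 := IsUltrametricDist.norm_add_le_max (algebraMap K L fn) αn
      rw [← h6, hnorm, norm_pow, max_eq_right (by linarith)] at h7
      have := lt_self_pow₀ hαn1 hp.out.one_lt
      linarith
    have hfn0 : fn ≠ 0 := norm_pos_iff.1 (by linarith)
    let e : A := ⟨fn⁻¹, by rw [hA, norm_inv]; exact inv_le_one_of_one_le₀ hfn1⟩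
    have hint : IsIntegral A αn⁻¹ := by
      refine ⟨X ^ p + (C e * X ^ (p - 1) - C e), ?_, ?_⟩
      · apply monic_X_pow_add
        refine lt_of_le_of_lt (degree_sub_le _ _) (max_lt ?_ ?_)
        · refine lt_of_le_of_lt (degree_C_mul_X_pow_le _ _) ?_
          exact_mod_cast Nat.sub_lt hp.out.pos one_pos
        · refine lt_of_le_of_lt degree_C_le ?_
          exact_mod_cast hp.out.pos
      · have he : algebraMap A L e = (αn ^ p - αn)⁻¹ := by
          rw [hαf, ← map_inv₀]; rfl
        have h00 : αn ^ p - αn ≠ 0 := by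
          rw [hαf]; simpa using hfn0
        simp only [eval₂_add, eval₂_sub, eval₂_mul, eval₂_C, eval₂_X_pow, he]
        obtain ⟨k, hk⟩ : ∃ k, p = k + 1 := ⟨p - 1, by have := hp.out.pos; omega⟩
        rw [hk] at h00 ⊢
        simp only [Nat.add_sub_cancel, inv_pow]
        field_simp
        ring
    let y : integralClosure A L := ⟨αn⁻¹, hint⟩
    have hyN : ‖Algebra.norm K αn⁻¹‖ = (‖αn‖ ^ p)⁻¹ := by rw [hN, norm_inv, inv_pow]
    have hge : 1 ≤ ‖αn‖ ^ p := one_le_pow₀ hαn1.le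
    let h0 : A := ⟨Algebra.norm K αn⁻¹, by rw [hA, hyN]; exact inv_le_one_of_one_le₀ hge⟩
    have hh0 : h0 ∈ H := by
      rw [hH1]
      refine Ideal.subset_span ⟨y, Ideal.subset_span ⟨Units.mk0 αn hαn0, ?_⟩, rfl⟩
      have : σ αn = αn + 1 := by
        rw [hαn, map_sub, hσα, AlgEquiv.commutes]; ring
      simp only [Units.val_mk0, this, y]
      field_simp
      ring
    obtain ⟨t, ht⟩ := hat r hr
    have ht0 : t ≠ 0 := by rw [← norm_ne_zero_iff, ht]; exact (Real.exp_pos _).ne'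
    have hh00 : (h0 : K) ≠ 0 := by
      rw [← norm_ne_zero_iff]
      change ‖Algebra.norm K αn⁻¹‖ ≠ 0
      rw [hyN]; positivity
    let s : A := ⟨t / h0, by
      rw [hA, norm_div]
      change ‖t‖ / ‖Algebra.norm K αn⁻¹‖ ≤ 1
      rw [hyN, ht, div_inv_eq_mul]
      calc Real.exp (-r) * ‖αn‖ ^ p ≤ Real.exp (-r) * Real.exp (γ n) ^ p := by
            gcongr; exact h5 n
        _ = Real.exp (-r + p * γ n) := by rw [← Real.exp_nat_mul, ← Real.exp_add]
        _ ≤ 1 := by rw [Real.exp_le_one_iff]; linarith⟩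
    refine ⟨s * h0, H.mul_mem_left s hh0, Units.mk0 t ht0, ?_, ?_⟩
    · change t = t / h0 * h0
      field_simp
    · simp [ht]

end Fin5
section Fin6
open Polynomial

theorem D_one {M : Type} [NormedField M] (D : M →+ M)
    (hl : ∀ x y, D (x * y) = x * D y + y * D x) : D 1 = 0 := by
  have := hl 1 1
  simpa using this

theorem D_pow {M : Type} [NormedField M] (D : M →+ M)
    (hl : ∀ x y, D (x * y) = x * D y + y * D x) (G : M) (n : ℕ) :
    D (G ^ n) = n * G ^ (n - 1) * D G := by
  induction n with
  | zero => simpa using D_one D hl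
  | succ n ih =>
    rw [pow_succ, hl, ih]
    rcases n with _ | n
    · simp
    · simp only [Nat.add_sub_cancel]; push_cast; ring

/-- the constant subfield in the limit -/
def cstK {M : Type} [NormedField M] (D : ℕ → M →+ M)
    (hl : ∀ m x y, D m (x * y) = x * D m y + y * D m x) : Subfield M where
  carrier := {x | Tendsto (fun m => D m x) atTop (𝓝 0)}
  mul_mem' := fun {x y} hx hy => by
    have h := (Tendsto.const_mul x hy).add (Tendsto.const_mul y hx)
    simp only [mul_zero, add_zero] at h
    exact h.congr fun m => (hl m x y).symm
  one_mem' := by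
    refine tendsto_const_nhds.congr fun m => ?_
    exact (D_one (D m) (hl m)).symm
  add_mem' := fun {x y} hx hy => by
    have h := Tendsto.add hx hy
    rw [add_zero] at h
    exact h.congr fun m => (map_add (D m) x y).symm
  zero_mem' := by
    refine tendsto_const_nhds.congr fun m => ?_
    exact (map_zero (D m)).symm
  neg_mem' := fun {x} hx => by
    have h := Tendsto.neg hx
    rw [neg_zero] at h
    exact h.congr fun m => (map_neg (D m) x).symm
  inv_mem' := fun x hx => by
    by_cases h0 : x = 0
    · rw [h0, inv_zero]
      refine tendsto_const_nhds.congr fun m => ?_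
      exact (map_zero (D m)).symm
    · have h := Tendsto.const_mul (-(x⁻¹ * x⁻¹)) hx
      rw [mul_zero] at h
      refine h.congr fun m => ?_
      have h1 := hl m x x⁻¹
      rw [mul_inv_cancel₀ h0, D_one (D m) (hl m)] at h1
      have h2 : D m x⁻¹ = x⁻¹ * (x * D m x⁻¹) := by field_simp
      rw [h2, eq_neg_of_add_eq_zero_left h1.symm]; ring

theorem mem_cstK {M : Type} [NormedField M] (D : ℕ → M →+ M)
    (hl : ∀ m x y, D m (x * y) = x * D m y + y * D m x) (x : M) :
    x ∈ cstK D hl ↔ Tendsto (fun m => D m x) atTop (𝓝 0) := Iff.rfl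

theorem cstK_complete {M : Type} [NormedField M] [CompleteSpace M] (D : ℕ → M →+ M)
    (hl : ∀ m x y, D m (x * y) = x * D m y + y * D m x) (hb : ∀ m x, ‖D m x‖ ≤ ‖x‖) :
    CompleteSpace (cstK D hl) := by
  have : IsClosed ((cstK D hl : Subfield M) : Set M) := by
    refine isClosed_of_closure_subset fun x hx => ?_
    rw [SetLike.mem_coe, mem_cstK, Metric.tendsto_nhds]
    intro ε hε
    obtain ⟨y, hy, hxy⟩ := Metric.mem_closure_iff.1 hx (ε / 2) (by positivity)
    have hy' : Tendsto (fun m => D m y) atTop (𝓝 0) := hy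
    filter_upwards [(Metric.tendsto_nhds.1 hy') (ε / 2) (by positivity)] with m hm
    rw [dist_zero_right] at hm ⊢
    have e : D m x = D m (x - y) + D m y := by rw [← map_add, sub_add_cancel]
    rw [e]
    rw [dist_eq_norm] at hxy
    linarith [norm_add_le (D m (x - y)) (D m y), hb m (x - y)]
  exact this.completeSpace_coe

theorem mid_abs {p : ℕ} [hp : Fact p.Prime] (Γ : AddSubgroup ℝ) (a : ℝ) (ha : 0 < a)
    {M N : Type} [NormedField M] [CompleteSpace M] [IsUltrametricDist M] [CharP M p]
    [NormedField N] [NormedAlgebra M N] [IsUltrametricDist N] [IsAlgClosed N]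
    (D : ℕ → M →+ M) (G : M) (g : ℕ → M)
    (hl : ∀ m x y, D m (x * y) = x * D m y + y * D m x)
    (hb : ∀ m x, ‖D m x‖ ≤ ‖x‖) (hat : ∀ r ∈ Γ, ∃ t : M, ‖t‖ = Real.exp (-r) ∧ ∀ m, D m t = 0)
    (hval : ∀ x : M, x ≠ 0 → ∃ r ∈ Γ, ‖x‖ = Real.exp (-r))
    (γ : ℕ → ℝ) (hγ : ∀ c > a / p, ∃ n, γ n < c) (hγ1 : ∀ n, a / p < γ n) (hγ2 : γ 0 < a)
    (hDG : ∀ m, ‖D m G‖ = Real.exp (γ m)) (hg : ∀ n m, n ≤ m → D m (g n) = 0)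
    (hGg : ∀ n, ‖G - g n‖ ≤ Real.exp (γ n)) (hg0 : g 0 = 0) :
    ∃ (K : Type) (_ : Field K) (_ : CharP K p) (A : ValuationSubring K)
      (_ : HenselianLocalRing ↥A) (v : Kˣ → ℝ),
      (∀ x y : Kˣ, v (x * y) = v x + v y) ∧
      (∀ x y z : Kˣ, (x : K) + (y : K) = (z : K) → min (v x) (v y) ≤ v z) ∧
      Set.range v = (Γ : Set ℝ) ∧
      (∀ x : Kˣ, ((x : K) ∈ A ↔ 0 ≤ v x)) ∧
      ∃ (L : Type) (_ : Field L) (_ : Algebra K L),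
        IsGalois K L ∧ FiniteDimensional K L ∧ IsCyclic (L ≃ₐ[K] L) ∧
        Nat.card (L ≃ₐ[K] L) = p ∧
        ∀ H : Ideal ↥A, IsAssociatedIdeal A L H →
          {r : ℝ | ∃ h ∈ H, ∃ x : Kˣ, (x : K) = ((h : ↥A) : K) ∧ v x = r} =
            {r : ℝ | r ∈ Γ ∧ a < r} := by
  have hp0 : (0 : ℝ) < p := by exact_mod_cast hp.out.pos
  have hcN : CharP N p := charP_of_injective_algebraMap (algebraMap M N).injective p
  let K := cstK D hl
  have hKc : CompleteSpace K := cstK_complete D hl hb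
  have hKu : IsUltrametricDist K := ⟨fun x y z => dist_triangle_max (x : M) y z⟩
  have hKp : CharP K p :=
    (RingHom.charP_iff (algebraMap K M) (algebraMap K M).injective p).2 inferInstance
  set ρ := Real.exp (a / p) with hρ
  have hρ0 : 0 < ρ := Real.exp_pos _
  have hρ1 : 1 < ρ := by rw [hρ, Real.one_lt_exp_iff]; positivity
  have hP := core_P (K := K) D hl hb (fun x => x.2) G ρ hρ0
    (fun m => by rw [hDG, hρ, Real.exp_lt_exp]; exact hγ1 m)
  have hfK : G ^ p ∈ K := by
    refine (mem_cstK D hl _).2 (tendsto_const_nhds.congr fun m => ?_)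
    rw [D_pow (D m) (hl m)]; simp
  obtain ⟨α, hα⟩ : ∃ α : N, α ^ p - α = algebraMap M N (G ^ p) := by
    generalize algebraMap M N (G ^ p) = c
    have hPe : (X ^ p - (X + C c)).natDegree = p := by
      rw [natDegree_sub_eq_left_of_natDegree_lt] <;> simp [hp.out.one_lt]
    obtain ⟨α, h⟩ := IsAlgClosed.exists_root (X ^ p - (X + C c))
      (by intro h; rw [natDegree_eq_of_degree_eq_some h] at hPe; exact hp.out.ne_zero hPe.symm)
    refine ⟨α, ?_⟩
    simp only [IsRoot.def, eval_sub, eval_add, eval_pow, eval_X, eval_C] at h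
    linear_combination h
  let β := α - algebraMap M N G
  have hαβ : β + algebraMap M N G = α := sub_add_cancel _ _
  have hβ : ‖β‖ < ρ := by
    by_contra! h
    have e : β ^ p = algebraMap M N G + β := by
      simp only [β]
      rw [sub_pow_char, ← map_pow, ← hα]; ring
    have h1 := IsUltrametricDist.norm_add_le_max (algebraMap M N G) β
    rw [← e, norm_pow, norm_algebraMap'] at h1
    have h2 := lt_self_pow₀ (lt_of_lt_of_le hρ1 h) hp.out.one_lt
    have h3 := hGg 0
    rw [hg0, sub_zero] at h3
    have h4 : ρ ^ p = Real.exp a := by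
      rw [hρ, ← Real.exp_nat_mul]; congr 1; field_simp
    have h5 : ρ ^ p ≤ ‖β‖ ^ p := pow_le_pow_left₀ hρ0.le h p
    have h6 : Real.exp (γ 0) < Real.exp a := Real.exp_lt_exp.2 hγ2
    rcases le_max_iff.1 h1 with h | h <;> linarith
  have hβ1 : ‖β + 1‖ < ρ :=
    lt_of_le_of_lt (IsUltrametricDist.norm_add_le_max _ _) (max_lt hβ (by rw [norm_one]; exact hρ1))
  have hαβ1 : β + 1 + algebraMap M N G = α + 1 := by rw [← hαβ]; ring
  have hT : ∀ q : K[X], q.natDegree < p → ‖aeval α q‖ = ‖aeval G q‖ := by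
    intro q hq
    have := core_T hρ0 hP q hq β hβ
    rwa [hαβ] at this
  have hT1 : ∀ q : K[X], q.natDegree < p → ‖aeval (α + 1) q‖ = ‖aeval G q‖ := by
    intro q hq
    have := core_T hρ0 hP q hq (β + 1) hβ1
    rwa [hαβ1] at this
  have hlin : ∀ x : K, ρ < ‖α - algebraMap K N x‖ ∧ ‖α - algebraMap K N x‖ = ‖G - x‖ := by
    intro x
    have h1 := hT (X - C x) (by rw [natDegree_X_sub_C]; exact hp.out.one_lt)
    have h2 := hP (X - C x)
    simp only [derivative_sub, derivative_X, derivative_C, sub_zero, map_one, norm_one, one_mul,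
      map_sub, aeval_X, aeval_C] at h1 h2
    refine ⟨?_, h1⟩
    rw [h1]
    exact h2.2 (norm_pos_iff.1 (lt_of_lt_of_le hρ0 h2.1))
  let L : IntermediateField K N := IntermediateField.adjoin K {α}
  let α' : L := IntermediateField.AdjoinSimple.gen K α
  have hLu : IsUltrametricDist L := ⟨fun x y z => dist_triangle_max (x : N) y z⟩
  have hint : IsIntegral K α := by
    refine ⟨X ^ p - (X + C ⟨G ^ p, hfK⟩), monic_X_pow_sub ?_, ?_⟩
    · rw [degree_X_add_C]; exact_mod_cast hp.out.one_lt
    · simp only [eval₂_sub, eval₂_add, eval₂_X_pow, eval₂_X, eval₂_C]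
      change α ^ p - (α + algebraMap M N (G ^ p)) = 0
      rw [← hα]; ring
  have hgen : Algebra.adjoin K {α'} = ⊤ := by
    have := (IntermediateField.adjoin.powerBasis hint).adjoin_gen_eq_top
    exact this
  have hco : ∀ (q : K[X]) (x : L), ((aeval x q : L) : N) = aeval (x : N) q := by
    intro q x
    exact (aeval_algHom_apply L.val x q).symm
  have hnormK : ∀ x : K, ‖algebraMap K N x‖ = ‖x‖ := by
    intro x
    change ‖algebraMap M N (x : M)‖ = ‖(x : M)‖
    rw [norm_algebraMap']
  have key := final_abs (p := p) Γ a ha (K := K) (L := L) hnormK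
    (fun r hr => by
      obtain ⟨t, h1, h2⟩ := hat r hr
      exact ⟨⟨t, (mem_cstK D hl _).2 (tendsto_const_nhds.congr fun m => (h2 m).symm)⟩, h1⟩)
    (fun x hx => hval x (fun h => hx (Subtype.ext h)))
    α' ⟨G ^ p, hfK⟩ (Subtype.ext hα)
    (fun x hx => by
      have h1 := (hlin x).1
      have h2 : algebraMap K N x = α := congrArg Subtype.val hx
      rw [h2, sub_self, norm_zero] at h1
      linarith)
    hgen
    (fun q hq => by
      change ‖((aeval (α' + 1) q : L) : N)‖ = ‖((aeval α' q : L) : N)‖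
      rw [hco, hco]
      exact (hT1 q hq).trans (hT q hq).symm)
    (fun q hq h0 => by
      change ‖((aeval (α' + 1) q : L) : N) - ((aeval α' q : L) : N)‖ * ρ < ‖((aeval α' q : L) : N)‖
      rw [hco, hco]
      have h1 : aeval α q ≠ 0 := by
        intro h
        apply h0
        apply Subtype.ext
        exact (hco q α').trans h
      have := core_S hρ0 hP hρ1 q hq β hβ (by rw [hαβ]; exact h1)
      rw [hαβ] at this
      exact this)
    γ hγ (fun n => ⟨g n, (mem_cstK D hl _).2 (tendsto_const_nhds.congr' (by
      filter_upwards [eventually_ge_atTop n] with m hm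
      exact (hg n m hm).symm))⟩)
    (fun n => (hlin _).1)
    (fun n => le_trans (le_of_eq (hlin ⟨g n, _⟩).2) (hGg n))
  obtain ⟨A, hA, v, h1, h2, h3, h4, h5⟩ := key
  exact ⟨K, inferInstance, hKp, A, hA, v, h1, h2, h3, h4, L, inferInstance, inferInstance, h5⟩

end Fin6
section Fin7

theorem seq_exists (Γ : AddSubgroup ℝ) (hΓ : Γ ≠ ⊥) (hΓZ : ¬Nonempty (↥Γ ≃+ ℤ)) (c d : ℝ)
    (hcd : c < d) : ∃ γ : ℕ → ℝ, (∀ n, γ n ∈ Γ) ∧ StrictAnti γ ∧ (∀ n, c < γ n) ∧ γ 0 < d ∧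
      ∀ e > c, ∃ n, γ n < e := by
  have hd : Dense (Γ : Set ℝ) := by
    rcases AddSubgroup.dense_or_cyclic Γ with h | ⟨b, hb⟩
    · exact h
    · exfalso
      have hb0 : b ≠ 0 := by
        rintro rfl
        apply hΓ
        rw [hb]; simp
      apply hΓZ
      have hinj : Function.Injective (zmultiplesHom ℝ b) := by
        intro m n h
        have : m • b = n • b := h
        exact smul_left_injective ℤ hb0 this
      have e1 : (zmultiplesHom ℝ b).range = Γ := by
        rw [hb, ← AddSubgroup.zmultiples_eq_closure]; rfl
      exact ⟨((AddMonoidHom.ofInjective hinj).trans (AddEquiv.addSubgroupCongr e1)).symm⟩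
  have hex : ∀ u v : ℝ, u < v → ∃ x ∈ Γ, u < x ∧ x < v := by
    intro u v h
    obtain ⟨x, hx, h1⟩ := hd.exists_between h
    exact ⟨x, hx, h1⟩
  choose! F hF1 hF2 hF3 using hex
  let γ : ℕ → ℝ := fun n => Nat.rec (F c d) (fun n x => F c (min x (c + 1 / (n + 1)))) n
  have hs : ∀ n, γ (n + 1) = F c (min (γ n) (c + 1 / (n + 1))) := fun n => rfl
  have hc : ∀ n, c < γ n ∧ γ n ∈ Γ := by
    intro n
    induction n with
    | zero => exact ⟨hF2 _ _ hcd, hF1 _ _ hcd⟩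
    | succ n ih =>
      have : c < min (γ n) (c + 1 / (n + 1)) := lt_min ih.1 (by
        have : (0 : ℝ) < 1 / (n + 1) := by positivity
        linarith)
      rw [hs]
      exact ⟨hF2 _ _ this, hF1 _ _ this⟩
  have hlt : ∀ n, γ (n + 1) < min (γ n) (c + 1 / (n + 1)) := by
    intro n
    rw [hs]
    exact hF3 _ _ (lt_min (hc n).1 (by
        have : (0 : ℝ) < 1 / (n + 1) := by positivity
        linarith))
  refine ⟨γ, fun n => (hc n).2, strictAnti_nat_of_succ_lt fun n => lt_of_lt_of_le (hlt n) (min_le_left _ _),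
    fun n => (hc n).1, hF3 _ _ hcd, fun e he => ?_⟩
  obtain ⟨n, hn⟩ := exists_nat_one_div_lt (sub_pos.2 he)
  refine ⟨n + 1, ?_⟩
  have := lt_of_lt_of_le (hlt n) (min_le_right _ _)
  linarith

end Fin7

end AuxAll

/-- Let `p` be a prime, `Γ` a nonzero subgroup of `ℝ` not isomorphic to `ℤ`, and `a` a
positive real number.  Then there are a field `K` of characteristic `p`, a Henselian valuation ring `A`
with fraction field `K`, a valuation `v : Kˣ → ℝ` with image `Γ` and
`A = {0} ∪ {x : v(x) ≥ 0}`, and a cyclic Galois extension `L/K` of degree `p` such that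
`{v(x) : x ∈ H, x ≠ 0} = {γ ∈ Γ : γ > a}`, where `H` is the ideal of `A` associated
to `L/K`. -/
theorem exists_assoc_ideal_value_set_eq_Ioi
    (p : ℕ) (hp : p.Prime) (Γ : AddSubgroup ℝ) (hΓ : Γ ≠ ⊥)
    (hΓZ : ¬Nonempty (↥Γ ≃+ ℤ)) (a : ℝ) (hapos : 0 < a) :
    ∃ (K : Type) (_ : Field K) (_ : CharP K p) (A : ValuationSubring K)
      (_ : HenselianLocalRing ↥A) (v : Kˣ → ℝ),
      (∀ x y : Kˣ, v (x * y) = v x + v y) ∧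
      (∀ x y z : Kˣ, (x : K) + (y : K) = (z : K) → min (v x) (v y) ≤ v z) ∧
      Set.range v = (Γ : Set ℝ) ∧
      (∀ x : Kˣ, ((x : K) ∈ A ↔ 0 ≤ v x)) ∧
      ∃ (L : Type) (_ : Field L) (_ : Algebra K L),
        IsGalois K L ∧ FiniteDimensional K L ∧ IsCyclic (L ≃ₐ[K] L) ∧
        Nat.card (L ≃ₐ[K] L) = p ∧
        ∀ H : Ideal ↥A, IsAssociatedIdeal A L H →
          {r : ℝ | ∃ h ∈ H, ∃ x : Kˣ, (x : K) = ((h : ↥A) : K) ∧ v x = r} =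
            {r : ℝ | r ∈ Γ ∧ a < r} := by
  haveI : Fact p.Prime := ⟨hp⟩
  have hp1 : (1 : ℝ) < p := by exact_mod_cast hp.one_lt
  have hlt : a / p < a := div_lt_self hapos hp1
  obtain ⟨γ, hm, hγ, hγ1, hγ2, hγ3⟩ := seq_exists Γ hΓ hΓZ (a / p) a hlt
  obtain ⟨M, i1, i2, i3, i4, D, G, g, hl, hb, hat, hval, hDG, hg, hGg, hg0⟩ :=
    hahn_exists p Γ hΓ γ hm hγ
  letI : NormedField (AlgebraicClosure M) := spectralNorm.normedField M (AlgebraicClosure M)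
  letI : NormedAlgebra M (AlgebraicClosure M) := spectralNorm.normedAlgebra M (AlgebraicClosure M)
  haveI : IsUltrametricDist (AlgebraicClosure M) :=
    IsUltrametricDist.isUltrametricDist_of_isNonarchimedean_norm
      (isNonarchimedean_spectralNorm (K := M) (L := AlgebraicClosure M))
  exact mid_abs Γ a hapos (M := M) (N := AlgebraicClosure M) D G g hl hb hat hval γ hγ3 hγ1 hγ2
    hDG hg hGg hg0
end
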